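/- arXiv:2406.18383 — 5 statements merged into one kernel-verified Lean document; each statement's English description precedes it below -/
import Mathlib

section
/- For every infinite binary sequence x ∈ B^ℕ, 2·γ̲(x) ≤ h̲(x) ≤ H(γ̲(x)). -/
open Filter Topology

/-- The factor of length `len` of the sequence `x` starting at position `i`. -/
def factor (x : ℕ → Bool) (i len : ℕ) : List Bool :=
  List.ofFn (fun j : Fin len => x (i + j))

/-- Number of (possibly overlapping) occurrences of the word `u`
in the prefix `x[0:n)` of the sequence `x`. -/
def occ (x : ℕ → Bool) (n : ℕ) (u : List Bool) : ℕ :=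
  ((Finset.range (n + 1 - u.length)).filter (fun i => factor x i u.length = u)).card

/-- Non-aligned `ℓ`-block entropy of the prefix `x[0:n)`
(logs are base 2, with the convention `0 · log 0 = 0`). -/
noncomputable def hBlock (ℓ : ℕ) (x : ℕ → Bool) (n : ℕ) : ℝ :=
  -(1 / (ℓ : ℝ)) * ∑ u : Fin ℓ → Bool,
    ((occ x n (List.ofFn u) : ℝ) / ((n : ℝ) - ℓ + 1)) *
      Real.logb 2 ((occ x n (List.ofFn u) : ℝ) / ((n : ℝ) - ℓ + 1))

/-- `h̲(x) = lim_{ℓ→∞} liminf_{n→∞} h_ℓ(x[0:n))` (the limit in `ℓ` exists). -/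
noncomputable def hLow (x : ℕ → Bool) : ℝ :=
  atTop.liminf fun ℓ => atTop.liminf fun n => hBlock ℓ x n

/-- `h̄(x) = lim_{ℓ→∞} limsup_{n→∞} h_ℓ(x[0:n))` (the limit in `ℓ` exists). -/
noncomputable def hUp (x : ℕ → Bool) : ℝ :=
  atTop.limsup fun ℓ => atTop.limsup fun n => hBlock ℓ x n

/-- `γ_ℓ(x[0:n))`: normalized minimal number of prediction errors when predicting
`x[i]` from the preceding `ℓ` symbols `x[i-ℓ:i)`, for `i ∈ {ℓ,…,n-1}`. -/
noncomputable def gammaWord (ℓ : ℕ) (x : ℕ → Bool) (n : ℕ) : ℝ :=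
  (1 / ((n : ℝ) - ℓ)) *
    ((Finset.univ : Finset ((Fin ℓ → Bool) → Bool)).inf' Finset.univ_nonempty
      (fun f => ((((Finset.Ico ℓ n).filter
        (fun i => x i ≠ f (fun j => x (i - ℓ + j)))).card : ℝ))))

/-- `β_ℓ(x[0:n))`: normalized minimal number of prediction errors when predicting
`x[i]` from the following `ℓ` symbols `x[i+1:i+ℓ+1)`, for `i ∈ {0,…,n-ℓ-1}`. -/
noncomputable def betaWord (ℓ : ℕ) (x : ℕ → Bool) (n : ℕ) : ℝ :=
  (1 / ((n : ℝ) - ℓ)) *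
    ((Finset.univ : Finset ((Fin ℓ → Bool) → Bool)).inf' Finset.univ_nonempty
      (fun f => ((((Finset.range (n - ℓ)).filter
        (fun i => x i ≠ f (fun j => x (i + 1 + j)))).card : ℝ))))

/-- `γ̲(x) = lim_{ℓ→∞} liminf_{n→∞} γ_ℓ(x[0:n))` (the limit in `ℓ` exists, by monotonicity). -/
noncomputable def gammaLow (x : ℕ → Bool) : ℝ :=
  atTop.liminf fun ℓ => atTop.liminf fun n => gammaWord ℓ x n

/-- `γ̄(x) = lim_{ℓ→∞} limsup_{n→∞} γ_ℓ(x[0:n))` (the limit in `ℓ` exists, by monotonicity). -/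
noncomputable def gammaUp (x : ℕ → Bool) : ℝ :=
  atTop.limsup fun ℓ => atTop.limsup fun n => gammaWord ℓ x n

/-- `β̲(x) = lim_{ℓ→∞} liminf_{n→∞} β_ℓ(x[0:n))` (the limit in `ℓ` exists, by monotonicity). -/
noncomputable def betaLow (x : ℕ → Bool) : ℝ :=
  atTop.liminf fun ℓ => atTop.liminf fun n => betaWord ℓ x n

/-- `β̄(x) = lim_{ℓ→∞} limsup_{n→∞} β_ℓ(x[0:n))` (the limit in `ℓ` exists, by monotonicity). -/
noncomputable def betaUp (x : ℕ → Bool) : ℝ :=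
  atTop.limsup fun ℓ => atTop.limsup fun n => betaWord ℓ x n

/-- Binary Shannon entropy function `H(α) = -α log α - (1-α) log (1-α)` (base-2 logs). -/
noncomputable def binEntropy (a : ℝ) : ℝ :=
  -(a * Real.logb 2 a) - (1 - a) * Real.logb 2 (1 - a)

/-- Conditional block entropy `Hc^{n,ℓ}(x)`:
`-Σ_{ā ∈ B^ℓ, a ∈ B, p(ā·a) > 0} p(ā·a) · log (p(ā·a)/p(ā))`, where
`p(ā) = occ(x[0:n-1), ā)/(n-ℓ)` and `p(ā·a) = occ(x[0:n), ā·a)/(n-ℓ)`. -/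
noncomputable def condEntropy (ℓ : ℕ) (x : ℕ → Bool) (n : ℕ) : ℝ :=
  -∑ u : Fin ℓ → Bool, ∑ a : Bool,
    (if 0 < ((occ x n (List.ofFn u ++ [a]) : ℝ) / ((n : ℝ) - ℓ)) then
      ((occ x n (List.ofFn u ++ [a]) : ℝ) / ((n : ℝ) - ℓ)) *
        Real.logb 2 (((occ x n (List.ofFn u ++ [a]) : ℝ) / ((n : ℝ) - ℓ)) /
          ((occ x (n - 1) (List.ofFn u) : ℝ) / ((n : ℝ) - ℓ)))
    else 0)

/-- The real number in `[0,1]` denoted by the binary sequence `x`. -/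
noncomputable def val (x : ℕ → Bool) : ℝ :=
  ∑' n : ℕ, (if x n then (1 : ℝ) else 0) / 2 ^ (n + 1)


namespace Rz

/-- count of occurrences with start in `range M` -/
def c (x : ℕ → Bool) (k M : ℕ) (u : Fin k → Bool) : ℕ :=
  ((Finset.range M).filter (fun i => (fun j : Fin k => x (i + j)) = u)).card

/-- count of occurrences followed by a letter -/
def c2 (x : ℕ → Bool) (k M : ℕ) (u : Fin k → Bool) (a : Bool) : ℕ :=
  ((Finset.range M).filter (fun i => (fun j : Fin k => x (i + j)) = u ∧ x (i + k) = a)).card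

/-- entropy in nats -/
noncomputable def E (x : ℕ → Bool) (k M : ℕ) : ℝ :=
  ∑ u : Fin k → Bool, Real.negMulLog ((c x k M u : ℝ) / M)

/-- minimal error -/
noncomputable def G (x : ℕ → Bool) (k M : ℕ) : ℝ :=
  ∑ u : Fin k → Bool, min ((c2 x k M u false : ℝ) / M) ((c2 x k M u true : ℝ) / M)

/-- errors of a predictor -/
def err (x : ℕ → Bool) (k M : ℕ) (f : (Fin k → Bool) → Bool) : ℕ :=
  ((Finset.range M).filter (fun i => x (i + k) ≠ f (fun j => x (i + j)))).card

lemma c_eq (x : ℕ → Bool) (k M : ℕ) (u : Fin k → Bool) :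
    c x k M u = c2 x k M u false + c2 x k M u true := by
  unfold c c2
  rw [← Finset.card_union_of_disjoint]
  · congr 1
    ext i
    simp only [Finset.mem_filter, Finset.mem_union, Finset.mem_range]
    cases x (i + k) <;> simp
  · rw [Finset.disjoint_left]
    intro i hi hj
    simp only [Finset.mem_filter] at hi hj
    simp_all

lemma c_snoc (x : ℕ → Bool) (k M : ℕ) (u : Fin k → Bool) (a : Bool) :
    c x (k + 1) M (Fin.snoc (α := fun _ => Bool) u a) = c2 x k M u a := by
  unfold c c2
  congr 1
  ext i
  simp only [Finset.mem_filter]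
  refine and_congr_right fun _ => ?_
  constructor
  · intro h
    constructor
    · funext j
      have := congrFun h j.castSucc
      simpa using this
    · have := congrFun h (Fin.last k)
      simpa using this
  · rintro ⟨h1, h2⟩
    funext j
    refine Fin.lastCases ?_ (fun j => ?_) j
    · simpa using h2
    · have := congrFun h1 j
      simpa using this

lemma sum_c (x : ℕ → Bool) (k M : ℕ) : ∑ u : Fin k → Bool, c x k M u = M := by
  unfold c
  rw [← Finset.card_eq_sum_card_fiberwise (f := fun i => (fun j : Fin k => x (i + j)))]
  · simp
  · intro i _; simp

lemma E_succ (x : ℕ → Bool) (k M : ℕ) :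
    E x (k + 1) M = ∑ u : Fin k → Bool, (Real.negMulLog ((c2 x k M u false : ℝ) / M) +
      Real.negMulLog ((c2 x k M u true : ℝ) / M)) := by
  unfold E
  rw [← (Fin.snocEquiv (fun _ : Fin (k+1) => Bool)).sum_comp, Fintype.sum_prod_type]
  simp only [Fin.snocEquiv, Equiv.coe_fn_mk, c_snoc, Fintype.sum_bool]
  rw [← Finset.sum_add_distrib]
  exact Finset.sum_congr rfl fun u _ => add_comm _ _

lemma alg (a b : ℝ) (ha : 0 ≤ a) (hb : 0 ≤ b) :
    Real.negMulLog a + Real.negMulLog b - Real.negMulLog (a + b) =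
      (a + b) * Real.binEntropy (min a b / (a + b)) := by
  wlog h : a ≤ b generalizing a b
  · have := this b a hb ha (le_of_not_ge h)
    rw [min_comm, add_comm a b, ← this]; ring
  rw [min_eq_left h, Real.binEntropy_eq_negMulLog_add_negMulLog_one_sub]
  rcases ha.eq_or_lt with rfl | ha'
  · simp
  have hb' : 0 < b := lt_of_lt_of_le ha' h
  have hs : 0 < a + b := by positivity
  have : 1 - a / (a + b) = b / (a + b) := by field_simp; ring
  rw [this]
  unfold Real.negMulLog
  rw [Real.log_div ha'.ne' hs.ne', Real.log_div hb'.ne' hs.ne']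
  field_simp
  ring

lemma two_mul_le_binEntropy (p : ℝ) (h0 : 0 ≤ p) (h1 : p ≤ 1 / 2) :
    2 * p * Real.log 2 ≤ Real.binEntropy p := by
  have hc := Real.strictConcave_binEntropy.concaveOn
  have m0 : (0 : ℝ) ∈ Set.Icc (0 : ℝ) 1 := by constructor <;> norm_num
  have m1 : (1 / 2 : ℝ) ∈ Set.Icc (0 : ℝ) 1 := by constructor <;> norm_num
  have := hc.2 m0 m1 (show 0 ≤ 1 - 2 * p by linarith) (show 0 ≤ 2 * p by linarith) (by ring)
  simp only [smul_eq_mul, one_div, Real.binEntropy_zero, Real.binEntropy_two_inv] at this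
  have e : (1 - 2 * p) * 0 + 2 * p * 2⁻¹ = p := by ring
  rw [e] at this
  linarith

lemma alg_lower (a b : ℝ) (ha : 0 ≤ a) (hb : 0 ≤ b) :
    2 * Real.log 2 * min a b ≤ Real.negMulLog a + Real.negMulLog b - Real.negMulLog (a + b) := by
  rw [alg a b ha hb]
  rcases (add_nonneg ha hb).eq_or_lt with h | h
  · have : a = 0 := by linarith
    have : b = 0 := by linarith
    subst_vars; simp
  have hm : 2 * min a b ≤ a + b := by
    linarith [min_le_left a b, min_le_right a b]
  have := two_mul_le_binEntropy (min a b / (a + b)) (by positivity)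
    (by rw [div_le_div_iff₀ h (by norm_num)]; linarith)
  calc _ = (a + b) * (2 * (min a b / (a + b)) * Real.log 2) := by field_simp
    _ ≤ _ := by gcongr

lemma E_sub (x : ℕ → Bool) (k M : ℕ) :
    E x (k + 1) M - E x k M = ∑ u : Fin k → Bool,
      (Real.negMulLog ((c2 x k M u false : ℝ) / M) + Real.negMulLog ((c2 x k M u true : ℝ) / M)
       - Real.negMulLog ((c2 x k M u false : ℝ) / M + (c2 x k M u true : ℝ) / M)) := by
  rw [E_succ, E, ← Finset.sum_sub_distrib]
  refine Finset.sum_congr rfl fun u _ => ?_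
  rw [c_eq]; push_cast; rw [add_div]

lemma E_sub_lower (x : ℕ → Bool) (k M : ℕ) :
    2 * Real.log 2 * G x k M ≤ E x (k + 1) M - E x k M := by
  rw [E_sub, G, Finset.mul_sum]
  exact Finset.sum_le_sum fun u _ => alg_lower _ _ (by positivity) (by positivity)

lemma sum_w (x : ℕ → Bool) (k M : ℕ) (hM : 0 < M) :
    ∑ u : Fin k → Bool, ((c2 x k M u false : ℝ) / M + (c2 x k M u true : ℝ) / M) = 1 := by
  have := sum_c x k M
  simp only [c_eq] at this
  simp only [← add_div]
  rw [← Finset.sum_div, div_eq_one_iff_eq (by positivity)]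
  exact_mod_cast this

lemma E_sub_upper (x : ℕ → Bool) (k M : ℕ) (hM : 0 < M) :
    E x (k + 1) M - E x k M ≤ Real.binEntropy (G x k M) := by
  rw [E_sub, G]
  have hc := Real.strictConcave_binEntropy.concaveOn
  have := hc.le_map_sum (t := Finset.univ)
    (w := fun u : Fin k → Bool => ((c2 x k M u false : ℝ) / M + (c2 x k M u true : ℝ) / M))
    (p := fun u : Fin k → Bool => min ((c2 x k M u false : ℝ) / M) ((c2 x k M u true : ℝ) / M) /
      ((c2 x k M u false : ℝ) / M + (c2 x k M u true : ℝ) / M))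
    (fun u _ => by positivity) (sum_w x k M hM) (fun u _ => by
      constructor
      · positivity
      · apply div_le_one_of_le₀ _ (by positivity)
        refine (min_le_left _ _).trans (le_add_of_nonneg_right (by positivity)))
  simp only [smul_eq_mul] at this
  refine le_trans (le_of_eq ?_) (this.trans (le_of_eq ?_))
  · exact Finset.sum_congr rfl fun u _ => alg _ _ (by positivity) (by positivity)
  · congr 1
    refine Finset.sum_congr rfl fun u _ => ?_
    rcases (show 0 ≤ (c2 x k M u false : ℝ) / M + (c2 x k M u true : ℝ) / M by positivity).eq_or_lt with h | h
    · have h1 : 0 ≤ (c2 x k M u false : ℝ) / M := by positivity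
      have h2 : 0 ≤ (c2 x k M u true : ℝ) / M := by positivity
      have h3 : (c2 x k M u false : ℝ) / M = 0 := by linarith
      have h4 : (c2 x k M u true : ℝ) / M = 0 := by linarith
      rw [h3, h4]; simp
    · exact mul_div_cancel₀ _ h.ne'

lemma G_nonneg (x : ℕ → Bool) (k M : ℕ) : 0 ≤ G x k M :=
  Finset.sum_nonneg fun u _ => by positivity

lemma G_le_half (x : ℕ → Bool) (k M : ℕ) : G x k M ≤ 1 / 2 := by
  rcases Nat.eq_zero_or_pos M with rfl | hM
  · simp [G]
  have : 2 * G x k M ≤ 1 := by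
    rw [← sum_w x k M hM, G, Finset.mul_sum]
    refine Finset.sum_le_sum fun u _ => ?_
    linarith [min_le_left ((c2 x k M u false : ℝ) / M) ((c2 x k M u true : ℝ) / M),
      min_le_right ((c2 x k M u false : ℝ) / M) ((c2 x k M u true : ℝ) / M)]
  linarith

lemma err_eq (x : ℕ → Bool) (k M : ℕ) (f : (Fin k → Bool) → Bool) :
    err x k M f = ∑ u : Fin k → Bool, c2 x k M u (!(f u)) := by
  unfold err c2
  rw [Finset.card_eq_sum_card_fiberwise (f := fun i => (fun j : Fin k => x (i + j)))
    (t := Finset.univ) (fun i _ => by simp)]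
  refine Finset.sum_congr rfl fun u _ => ?_
  congr 1
  ext i
  simp only [Finset.mem_filter, and_assoc]
  refine and_congr_right fun _ => ?_
  constructor
  · rintro ⟨h1, h2⟩
    refine ⟨h2, ?_⟩
    rw [← h2]
    exact Bool.eq_not.mpr h1
  · rintro ⟨h2, h1⟩
    refine ⟨?_, h2⟩
    rw [h2]
    exact Bool.eq_not.mp h1

lemma G_le_err (x : ℕ → Bool) (k M : ℕ) (f : (Fin k → Bool) → Bool) :
    G x k M ≤ (err x k M f : ℝ) / M := by
  rw [err_eq, G]
  push_cast
  rw [Finset.sum_div]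
  refine Finset.sum_le_sum fun u _ => ?_
  cases f u
  · exact min_le_right _ _
  · exact min_le_left _ _

lemma exists_err (x : ℕ → Bool) (k M : ℕ) : ∃ f : (Fin k → Bool) → Bool,
    G x k M = (err x k M f : ℝ) / M := by
  refine ⟨fun u => decide (c2 x k M u false ≤ c2 x k M u true), ?_⟩
  rw [err_eq, G]
  push_cast
  rw [Finset.sum_div]
  refine Finset.sum_congr rfl fun u _ => ?_
  by_cases h : c2 x k M u false ≤ c2 x k M u true
  · simp only [h, decide_true, Bool.not_true]
    exact min_eq_left (by gcongr)
  · simp only [h, decide_false, Bool.not_false]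
    exact min_eq_right (by have := le_of_not_ge h; gcongr)

lemma G_succ (x : ℕ → Bool) (k M : ℕ) : G x (k + 1) M ≤ G x k M + 1 / M := by
  obtain ⟨f, hf⟩ := exists_err x k M
  rw [hf, ← add_div]
  refine (G_le_err x (k+1) M (fun u => f (fun j => u j.succ))).trans ?_
  gcongr
  have : err x (k+1) M (fun u => f (fun j => u j.succ)) ≤ err x k M f + 1 := by
    unfold err
    rw [← Finset.card_map (addRightEmbedding 1)]
    refine le_trans (Finset.card_le_card (t := insert M ((Finset.range M).filter
      (fun i => x (i + k) ≠ f (fun j => x (i + j))))) ?_) (Finset.card_insert_le _ _)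
    intro i hi
    simp only [Finset.mem_map, Finset.mem_filter, Finset.mem_range, addRightEmbedding_apply] at hi
    obtain ⟨a, ⟨ha, hb⟩, rfl⟩ := hi
    simp only [Finset.mem_insert, Finset.mem_filter, Finset.mem_range]
    by_cases h : a + 1 = M
    · exact Or.inl h
    refine Or.inr ⟨by omega, ?_⟩
    have e : a + 1 + k = a + (k + 1) := by ring
    rw [e]
    convert hb using 4 with j
    simp only [Fin.val_succ]
    ring_nf
  exact_mod_cast this

lemma G_add (x : ℕ → Bool) (k d M : ℕ) : G x (k + d) M ≤ G x k M + d / M := by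
  induction d with
  | zero => simp
  | succ d ih =>
    have := G_succ x (k + d) M
    rw [← add_assoc]
    push_cast
    rw [add_div]
    linarith

lemma E_zero (x : ℕ → Bool) (M : ℕ) : E x 0 M = 0 := by
  rcases Nat.eq_zero_or_pos M with rfl | hM
  · simp [E]
  have := sum_c x 0 M
  simp only [Finset.univ_unique, Finset.sum_singleton] at this
  simp only [E, Finset.univ_unique, Finset.sum_singleton, this]
  rw [div_self (by positivity)]; simp

lemma E_sum (x : ℕ → Bool) (k M : ℕ) :
    E x k M = ∑ i ∈ Finset.range k, (E x (i + 1) M - E x i M) := by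
  rw [Finset.sum_range_sub (fun i => E x i M), E_zero, sub_zero]

lemma E_lower (x : ℕ → Bool) (l M : ℕ) :
    2 * Real.log 2 * l * (G x l M - l / M) ≤ E x l M := by
  rw [E_sum]
  have h2 : 0 < Real.log 2 := Real.log_pos (by norm_num)
  calc _ = ∑ i ∈ Finset.range l, 2 * Real.log 2 * (G x l M - l / M) := by
        rw [Finset.sum_const, Finset.card_range, nsmul_eq_mul]; ring
    _ ≤ _ := by
        refine Finset.sum_le_sum fun i hi => le_trans ?_ (E_sub_lower x i M)
        have hi' := Finset.mem_range.mp hi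
        gcongr
        have := G_add x i (l - i) M
        rw [Nat.add_sub_cancel' hi'.le] at this
        have h3 : ((l - i : ℕ) : ℝ) / M ≤ (l : ℝ) / M := by
          gcongr; exact_mod_cast Nat.sub_le _ _
        linarith

lemma E_nonneg (x : ℕ → Bool) (l M : ℕ) : 0 ≤ E x l M := by
  rw [E_sum]
  have h2 : 0 < Real.log 2 := Real.log_pos (by norm_num)
  refine Finset.sum_nonneg fun i _ => le_trans ?_ (E_sub_lower x i M)
  have := G_nonneg x i M
  positivity

/-- monotone version of binary entropy -/
noncomputable def Hb (t : ℝ) : ℝ := Real.binEntropy (max 0 (min t 2⁻¹)) / Real.log 2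

lemma Hb_mono : Monotone Hb := by
  intro s t h
  unfold Hb
  have h2 : 0 < Real.log 2 := Real.log_pos (by norm_num)
  gcongr
  apply Real.binEntropy_strictMonoOn.monotoneOn
  · exact ⟨le_max_left _ _, max_le (by norm_num) (min_le_right _ _)⟩
  · exact ⟨le_max_left _ _, max_le (by norm_num) (min_le_right _ _)⟩
  · exact max_le_max le_rfl (min_le_min h le_rfl)

lemma Hb_cont : Continuous Hb := by
  unfold Hb
  have := Real.binEntropy_continuous
  fun_prop

lemma Hb_eq (t : ℝ) (h0 : 0 ≤ t) (h1 : t ≤ 1 / 2) : Hb t = Real.binEntropy t / Real.log 2 := by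
  unfold Hb
  rw [min_eq_left (by linarith), max_eq_right h0]

lemma Hb_le_one (t : ℝ) : Hb t ≤ 1 := by
  unfold Hb
  have h2 : 0 < Real.log 2 := Real.log_pos (by norm_num)
  rw [div_le_one h2]
  exact Real.binEntropy_le_log_two

lemma Hb_nonneg (t : ℝ) : 0 ≤ Hb t := by
  unfold Hb
  have h2 : 0 < Real.log 2 := Real.log_pos (by norm_num)
  refine div_nonneg (Real.binEntropy_nonneg (le_max_left _ _) ?_) h2.le
  exact max_le (by norm_num) ((min_le_right _ _).trans (by norm_num))

lemma Hb_binEntropy (t : ℝ) (h0 : 0 ≤ t) (h1 : t ≤ 1 / 2) : Hb t = _root_.binEntropy t := by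
  rw [Hb_eq t h0 h1, Real.binEntropy_eq_negMulLog_add_negMulLog_one_sub]
  unfold _root_.binEntropy Real.negMulLog Real.logb
  ring

lemma E_upper (x : ℕ → Bool) (m l M : ℕ) (hM : 0 < M) :
    E x l M ≤ Real.log 2 * (m + l * Hb (G x m M + l / M)) := by
  have h2 : 0 < Real.log 2 := Real.log_pos (by norm_num)
  have key : ∀ i ∈ Finset.range l, E x (i + 1) M - E x i M ≤
      Real.log 2 * ((if i < m then 1 else 0) + Hb (G x m M + l / M)) := by
    intro i hi
    have hi' := Finset.mem_range.mp hi
    have h := E_sub_upper x i M hM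
    have e : Real.binEntropy (G x i M) = Real.log 2 * Hb (G x i M) := by
      rw [Hb_eq _ (G_nonneg ..) (G_le_half ..)]; field_simp
    rw [e] at h
    refine h.trans ?_
    gcongr
    split_ifs with hm
    · linarith [Hb_le_one (G x i M), Hb_nonneg (G x m M + l / M)]
    · rw [zero_add]
      apply Hb_mono
      have := G_add x m (i - m) M
      rw [Nat.add_sub_cancel' (not_lt.mp hm)] at this
      refine this.trans ?_
      gcongr
      omega
  rw [E_sum]
  refine (Finset.sum_le_sum key).trans ?_
  rw [← Finset.mul_sum, Finset.sum_add_distrib, Finset.sum_const, Finset.card_range, nsmul_eq_mul]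
  gcongr
  rw [Finset.sum_boole]
  have : ((Finset.range l).filter (fun i => i < m)).card ≤ (Finset.range m).card :=
    Finset.card_le_card fun i hi => by
      simp only [Finset.mem_filter, Finset.mem_range] at *; exact hi.2
  rw [Finset.card_range] at this
  exact_mod_cast this

lemma gammaWord_eq (x : ℕ → Bool) (l M : ℕ) : gammaWord l x (M + l) = G x l M := by
  have herr : ∀ f : (Fin l → Bool) → Bool, (((Finset.Ico l (M + l)).filter
        (fun i => x i ≠ f (fun j => x (i - l + j)))).card) = err x l M f := by
    intro f
    unfold err
    rw [← Finset.card_map (s := Finset.filter _ (Finset.range M)) (addRightEmbedding l)]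
    congr 1
    ext i
    simp only [Finset.mem_map, Finset.mem_filter, Finset.mem_range, Finset.mem_Ico,
      addRightEmbedding_apply]
    constructor
    · rintro ⟨⟨h1, h2⟩, h3⟩
      refine ⟨i - l, ⟨by omega, ?_⟩, by omega⟩
      rwa [Nat.sub_add_cancel h1]
    · rintro ⟨a, ⟨h1, h2⟩, rfl⟩
      refine ⟨⟨by omega, by omega⟩, ?_⟩
      rwa [Nat.add_sub_cancel]
  unfold gammaWord
  simp only [herr]
  have e : ((M + l : ℕ) : ℝ) - l = M := by push_cast; ring
  rw [e]
  rcases Nat.eq_zero_or_pos M with rfl | hM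
  · simp [G]
  have hM' : (0 : ℝ) < M := by exact_mod_cast hM
  rw [one_div, inv_mul_eq_div]
  apply le_antisymm
  · obtain ⟨f, hf⟩ := exists_err x l M
    rw [hf]
    gcongr
    exact Finset.inf'_le _ (Finset.mem_univ f)
  · rw [le_div_iff₀ hM']
    apply Finset.le_inf'
    intro f _
    rw [← le_div_iff₀ hM']
    exact G_le_err x l M f

lemma hBlock_eq (x : ℕ → Bool) (l M : ℕ) :
    hBlock l x (M + l) = E x l (M + 1) / (l * Real.log 2) := by
  unfold hBlock E
  have hocc : ∀ u : Fin l → Bool, occ x (M + l) (List.ofFn u) = c x l (M + 1) u := by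
    intro u
    unfold occ c factor
    have e : M + l + 1 - l = M + 1 := by omega
    simp only [List.length_ofFn, e]
    congr 1
    ext i
    simp only [Finset.mem_filter]
    refine and_congr_right fun _ => ?_
    rw [← List.ofFn_inj (n := l)]
    rfl
  simp only [hocc]
  have e : ((M + l : ℕ) : ℝ) - l + 1 = (M + 1 : ℕ) := by push_cast; ring
  rw [e, Finset.mul_sum, Finset.sum_div]
  refine Finset.sum_congr rfl fun u _ => ?_
  unfold Real.negMulLog Real.logb
  ring

/-- lower limit of `G` -/
noncomputable def g (x : ℕ → Bool) (l : ℕ) : ℝ := atTop.liminf fun M => G x l M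

/-- normalized entropy -/
noncomputable def F (x : ℕ → Bool) (l M : ℕ) : ℝ := E x l M / (l * Real.log 2)

/-- lower limit of `F` -/
noncomputable def h (x : ℕ → Bool) (l : ℕ) : ℝ := atTop.liminf fun M => F x l M

lemma gammaLow_eq (x : ℕ → Bool) : gammaLow x = atTop.liminf (g x) := by
  unfold gammaLow
  congr 1
  funext l
  rw [← liminf_nat_add _ l]
  simp only [gammaWord_eq]
  rfl

lemma hLow_eq (x : ℕ → Bool) : hLow x = atTop.liminf (h x) := by
  unfold hLow
  congr 1
  funext l
  rw [← liminf_nat_add _ l, h, ← liminf_nat_add (fun M => F x l M) 1]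
  simp only [hBlock_eq]
  rfl

lemma F_nonneg (x : ℕ → Bool) (l M : ℕ) : 0 ≤ F x l M := by
  have h2 : 0 < Real.log 2 := Real.log_pos (by norm_num)
  have := E_nonneg x l M
  unfold F; positivity

lemma F_le (x : ℕ → Bool) (m l M : ℕ) (hl : 0 < l) (hM : 0 < M) :
    F x l M ≤ m / l + Hb (G x m M + l / M) := by
  have h2 : 0 < Real.log 2 := Real.log_pos (by norm_num)
  have hl' : (0 : ℝ) < l := by exact_mod_cast hl
  unfold F
  rw [div_le_iff₀ (by positivity)]
  refine (E_upper x m l M hM).trans (le_of_eq ?_)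
  field_simp

lemma le_F (x : ℕ → Bool) (l M : ℕ) (hl : 0 < l) : 2 * (G x l M - l / M) ≤ F x l M := by
  have h2 : 0 < Real.log 2 := Real.log_pos (by norm_num)
  have hl' : (0 : ℝ) < l := by exact_mod_cast hl
  unfold F
  rw [le_div_iff₀ (by positivity)]
  refine le_trans (le_of_eq ?_) (E_lower x l M)
  ring

lemma F_le_one (x : ℕ → Bool) (l M : ℕ) : F x l M ≤ 1 := by
  rcases Nat.eq_zero_or_pos l with rfl | hl
  · simp [F]
  rcases Nat.eq_zero_or_pos M with rfl | hM
  · simp [F, E]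
  have := F_le x 0 l M hl hM
  simp only [Nat.cast_zero, zero_div, zero_add] at this
  exact this.trans (Hb_le_one _)

lemma bdd_below {u : ℕ → ℝ} (a : ℝ) (hu : ∀ n, a ≤ u n) :
    IsBoundedUnder (· ≥ ·) atTop u := isBoundedUnder_of ⟨a, hu⟩

lemma cobdd {u : ℕ → ℝ} (a : ℝ) (hu : ∀ n, u n ≤ a) :
    IsCoboundedUnder (· ≥ ·) atTop u :=
  (isBoundedUnder_of (r := (· ≤ ·)) ⟨a, hu⟩).isCoboundedUnder_ge

lemma liminf_mem {u : ℕ → ℝ} {a b : ℝ} (ha : ∀ n, a ≤ u n) (hb : ∀ n, u n ≤ b) :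
    a ≤ atTop.liminf u ∧ atTop.liminf u ≤ b :=
  ⟨le_liminf_of_le (cobdd b hb) (Eventually.of_forall ha),
   liminf_le_of_frequently_le (Frequently.of_forall hb) (bdd_below a ha)⟩

lemma g_mem (x : ℕ → Bool) (l : ℕ) : 0 ≤ g x l ∧ g x l ≤ 1 / 2 :=
  liminf_mem (G_nonneg x l) (G_le_half x l)

lemma h_mem (x : ℕ → Bool) (l : ℕ) : 0 ≤ h x l ∧ h x l ≤ 1 :=
  liminf_mem (F_nonneg x l) (F_le_one x l)

lemma ev_small (l : ℕ) {e : ℝ} (he : 0 < e) : ∀ᶠ M : ℕ in atTop, 0 < M ∧ (l : ℝ) / M < e :=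
  (eventually_gt_atTop 0).and
    ((tendsto_const_div_atTop_nhds_zero_nat (l : ℝ)).eventually_lt_const he)

lemma lower (x : ℕ → Bool) (l : ℕ) (hl : 0 < l) : 2 * g x l ≤ h x l := by
  refine le_of_forall_pos_le_add fun e he => ?_
  rw [← sub_le_iff_le_add]
  refine le_liminf_of_le (cobdd 1 (F_le_one x l)) ?_
  have h1 : ∀ᶠ M in atTop, g x l - e / 4 < G x l M :=
    eventually_lt_of_lt_liminf (by show _ < g x l; linarith) (bdd_below 0 (G_nonneg x l))
  filter_upwards [h1, ev_small l (show 0 < e / 4 by positivity)] with M hM hM2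
  linarith [le_F x l M hl, hM2.2]

lemma upper1 (x : ℕ → Bool) (m l : ℕ) (hl : 0 < l) {d : ℝ} (hd : 0 < d) :
    h x l ≤ m / l + Hb (g x m + d) := by
  refine liminf_le_of_frequently_le ?_ (bdd_below 0 (F_nonneg x l))
  have h1 : ∃ᶠ M in atTop, G x m M < g x m + d / 2 :=
    frequently_lt_of_liminf_lt (cobdd _ (G_le_half x m)) (by show g x m < _; linarith)
  refine (h1.and_eventually (ev_small l (show 0 < d / 2 by positivity))).mono ?_
  rintro M ⟨h1, h2, h3⟩
  refine (F_le x m l M hl h2).trans ?_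
  gcongr
  apply Hb_mono
  linarith

lemma upper2 (x : ℕ → Bool) (m : ℕ) {d : ℝ} (hd : 0 < d) :
    hLow x ≤ Hb (g x m + d) := by
  rw [hLow_eq]
  have ht : Tendsto (fun l : ℕ => (m : ℝ) / l + Hb (g x m + d)) atTop (𝓝 (Hb (g x m + d))) := by
    simpa using (tendsto_const_div_atTop_nhds_zero_nat (m : ℝ)).add_const (Hb (g x m + d))
  rw [← ht.liminf_eq]
  refine liminf_le_liminf ?_ (bdd_below 0 fun l => (h_mem x l).1)
    ht.isBoundedUnder_le.isCoboundedUnder_ge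
  filter_upwards [eventually_gt_atTop 0] with l hl
  exact upper1 x m l hl hd

lemma upper3 (x : ℕ → Bool) {d : ℝ} (hd : 0 < d) : hLow x ≤ Hb (gammaLow x + d) := by
  have h1 : ∃ᶠ m in atTop, g x m < gammaLow x + d / 2 :=
    frequently_lt_of_liminf_lt (cobdd _ fun m => (g_mem x m).2) (by
      rw [← gammaLow_eq]; linarith)
  obtain ⟨m, hm⟩ := h1.exists
  refine (upper2 x m (show 0 < d / 2 by positivity)).trans (Hb_mono (by linarith))

lemma upper4 (x : ℕ → Bool) : hLow x ≤ Hb (gammaLow x) := by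
  have ht : Tendsto (fun d : ℝ => Hb (gammaLow x + d)) (𝓝[>] 0) (𝓝 (Hb (gammaLow x))) := by
    have : Continuous fun d : ℝ => Hb (gammaLow x + d) := by
      have := Hb_cont
      fun_prop
    have := this.tendsto 0
    rw [add_zero] at this
    exact this.mono_left nhdsWithin_le_nhds
  refine ge_of_tendsto ht ?_
  filter_upwards [self_mem_nhdsWithin] with d hd
  exact upper3 x hd

lemma lower2 (x : ℕ → Bool) : 2 * gammaLow x ≤ hLow x := by
  refine le_of_forall_pos_le_add fun e he => ?_
  rw [← sub_le_iff_le_add, hLow_eq]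
  refine le_liminf_of_le (cobdd 1 fun l => (h_mem x l).2) ?_
  have h1 : ∀ᶠ l in atTop, gammaLow x - e / 4 < g x l :=
    eventually_lt_of_lt_liminf (by rw [← gammaLow_eq]; linarith)
      (bdd_below 0 fun l => (g_mem x l).1)
  filter_upwards [h1, eventually_gt_atTop 0] with l hl hl0
  linarith [lower x l hl0]

end Rz

theorem rauzy_lower_gamma_liminf (x : ℕ → Bool) :
    2 * gammaLow x ≤ hLow x ∧ hLow x ≤ binEntropy (gammaLow x) := by
  refine ⟨Rz.lower2 x, ?_⟩
  have hm : 0 ≤ gammaLow x ∧ gammaLow x ≤ 1 / 2 := by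
    rw [Rz.gammaLow_eq]
    exact Rz.liminf_mem (fun l => (Rz.g_mem x l).1) (fun l => (Rz.g_mem x l).2)
  rw [← Rz.Hb_binEntropy _ hm.1 hm.2]
  exact Rz.upper4 x
end

section
/- For every infinite binary sequence x ∈ B^ℕ, 2·γ̄(x) ≤ h̄(x) ≤ H(γ̄(x)). -/
open Filter Topology

section RauzyAux

lemma ls_le {u : ℕ → ℝ} {a : ℝ} (h0 : ∀ N, 0 ≤ u N) (h : ∀ᶠ N in atTop, u N ≤ a) :
    atTop.limsup u ≤ a := by
  refine limsup_le_of_le ?_ h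
  exact IsCoboundedUnder.of_frequently_ge (a := 0) (Eventually.of_forall h0).frequently

lemma ls_ev {u : ℕ → ℝ} {B ε : ℝ} (hB : ∀ N, u N ≤ B) (hε : 0 < ε) :
    ∀ᶠ N in atTop, u N < atTop.limsup u + ε :=
  eventually_lt_of_limsup_lt (by linarith) ⟨B, eventually_map.2 (Eventually.of_forall hB)⟩

lemma ls_nonneg {u : ℕ → ℝ} {B : ℝ} (h0 : ∀ N, 0 ≤ u N) (hB : ∀ N, u N ≤ B) :
    0 ≤ atTop.limsup u := by
  refine le_limsup_of_frequently_le (Eventually.of_forall h0).frequently ?_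
  exact ⟨B, eventually_map.2 (Eventually.of_forall hB)⟩

lemma ls_mono_eps {u v : ℕ → ℝ} {B : ℝ} (h0 : ∀ N, 0 ≤ u N) (hB : ∀ N, v N ≤ B)
    (h : ∀ ε > 0, ∀ᶠ N in atTop, u N ≤ v N + ε) : atTop.limsup u ≤ atTop.limsup v := by
  refine le_of_forall_pos_le_add fun ε hε => ls_le h0 ?_
  filter_upwards [h (ε / 2) (by linarith), ls_ev hB (half_pos hε)] with N h1 h2
  linarith

lemma rauzy_abstract (G Hc : ℕ → ℕ → ℝ) (h0 : ∀ k N, 0 ≤ G k N) (h1 : ∀ k N, G k N ≤ 2⁻¹)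
    (hm : ∀ k N, G (k + 1) N ≤ G k N + 1 / (N : ℝ))
    (hl : ∀ k N, 2 * Real.log 2 * G k N ≤ Hc k N)
    (hu : ∀ k N, Hc k N ≤ Real.binEntropy (G k N)) :
    2 * (atTop.limsup fun ℓ => atTop.limsup fun N => G ℓ N) ≤
      (atTop.limsup fun ℓ : ℕ => atTop.limsup fun N =>
        (1 / (ℓ : ℝ)) * ((∑ k ∈ Finset.range ℓ, Hc k N) / Real.log 2)) ∧
    (atTop.limsup fun ℓ : ℕ => atTop.limsup fun N =>
        (1 / (ℓ : ℝ)) * ((∑ k ∈ Finset.range ℓ, Hc k N) / Real.log 2)) ≤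
      Real.binEntropy (atTop.limsup fun ℓ => atTop.limsup fun N => G ℓ N) / Real.log 2 := by
  have hlog : 0 < Real.log 2 := Real.log_pos (by norm_num)
  set g : ℕ → ℝ := fun ℓ => atTop.limsup fun N => G ℓ N with hg
  set s : ℕ → ℕ → ℝ := fun ℓ N =>
    (1 / (ℓ : ℝ)) * ((∑ k ∈ Finset.range ℓ, Hc k N) / Real.log 2) with hs
  set a : ℕ → ℝ := fun ℓ => atTop.limsup fun N => s ℓ N with ha
  have hHc0 : ∀ k N, 0 ≤ Hc k N := fun k N =>
    le_trans (mul_nonneg (by positivity) (h0 k N)) (hl k N)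
  have hHc1 : ∀ k N, Hc k N ≤ Real.log 2 := fun k N =>
    (hu k N).trans Real.binEntropy_le_log_two
  have hs0 : ∀ ℓ N, 0 ≤ s ℓ N := fun ℓ N => by
    have : 0 ≤ ∑ k ∈ Finset.range ℓ, Hc k N := Finset.sum_nonneg fun k _ => hHc0 k N
    positivity
  have hs1 : ∀ ℓ N, s ℓ N ≤ 1 := fun ℓ N => by
    have h : ∑ k ∈ Finset.range ℓ, Hc k N ≤ ℓ * Real.log 2 := by
      calc _ ≤ ∑ k ∈ Finset.range ℓ, Real.log 2 := Finset.sum_le_sum fun k _ => hHc1 k N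
        _ = _ := by simp
    rcases Nat.eq_zero_or_pos ℓ with rfl | hℓ
    · simp [hs]
    · have : (0 : ℝ) < ℓ := by exact_mod_cast hℓ
      simp only [hs]
      rw [one_div, inv_mul_le_iff₀ this, div_le_iff₀ hlog]
      linarith
  have hg0 : ∀ k, 0 ≤ g k := fun k => ls_nonneg (h0 k) (h1 k)
  have hg1 : ∀ k, g k ≤ 2⁻¹ := fun k => ls_le (h0 k) (Eventually.of_forall (h1 k))
  have hsm : ∀ ε > (0 : ℝ), ∀ᶠ N : ℕ in atTop, 1 / (N : ℝ) < ε := fun ε hε =>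
    (tendsto_one_div_atTop_nhds_zero_nat (𝕜 := ℝ)).eventually_lt_const hε
  have hanti : Antitone g := by
    refine antitone_nat_of_succ_le fun k => ls_mono_eps (h0 _) (h1 _) fun ε hε => ?_
    filter_upwards [hsm ε hε] with N hN
    linarith [hm k N]
  have htend : Tendsto g atTop (𝓝 (⨅ k, g k)) :=
    tendsto_atTop_ciInf hanti ⟨0, by rintro _ ⟨k, rfl⟩; exact hg0 k⟩
  rw [htend.limsup_eq]
  set γ := ⨅ k, g k
  have ha0 : ∀ ℓ, 0 ≤ a ℓ := fun ℓ => ls_nonneg (hs0 ℓ) (hs1 ℓ)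
  have ha1 : ∀ ℓ, a ℓ ≤ 1 := fun ℓ => ls_le (hs0 ℓ) (Eventually.of_forall (hs1 ℓ))
  constructor
  · have hGm : ∀ ℓ k, k ≤ ℓ → ∀ N, G ℓ N ≤ G k N + ((ℓ - k : ℕ) : ℝ) * (1 / (N : ℝ)) := by
      intro ℓ k hk N
      induction ℓ, hk using Nat.le_induction with
      | base => simp
      | succ m hkm ih =>
        rw [Nat.succ_sub hkm]; push_cast
        linarith [hm m N]
    have key : ∀ ℓ, 1 ≤ ℓ → 2 * g ℓ ≤ a ℓ := by
      intro ℓ hℓ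
      have hℓ' : (0 : ℝ) < ℓ := by exact_mod_cast hℓ
      refine le_of_forall_pos_le_add fun ε hε => ?_
      suffices g ℓ ≤ (a ℓ + ε) / 2 by linarith
      refine ls_le (h0 ℓ) ?_
      filter_upwards [hsm (ε / (4 * ℓ)) (by positivity), ls_ev (hs1 ℓ) (half_pos hε)] with N hN hN2
      have e1 : ℓ * (1 / (N : ℝ)) ≤ ε / 4 := by
        calc _ ≤ ℓ * (ε / (4 * ℓ)) := by gcongr
          _ = ε / 4 := by field_simp
      have e2 : ∀ k ∈ Finset.range ℓ, 2 * Real.log 2 * (G ℓ N - ε / 4) ≤ Hc k N := by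
        intro k hk
        refine le_trans ?_ (hl k N)
        have := hGm ℓ k (Finset.mem_range.1 hk).le N
        have h3 : ((ℓ - k : ℕ) : ℝ) * (1 / (N : ℝ)) ≤ ℓ * (1 / (N : ℝ)) := by
          gcongr; omega
        gcongr
        linarith
      have e3 := Finset.card_nsmul_le_sum _ _ _ e2
      simp only [Finset.card_range, nsmul_eq_mul] at e3
      have e4 : 2 * (G ℓ N - ε / 4) ≤ s ℓ N := by
        simp only [hs]
        rw [one_div, le_inv_mul_iff₀ hℓ', le_div_iff₀ hlog]
        linarith
      have hN3 : s ℓ N < a ℓ + ε / 2 := hN2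
      linarith
    have h2 : Tendsto (fun ℓ => 2 * g ℓ) atTop (𝓝 (2 * γ)) := htend.const_mul 2
    refine le_of_forall_pos_le_add fun ε hε => ?_
    refine le_of_tendsto h2 ?_
    filter_upwards [eventually_ge_atTop 1, ls_ev ha1 hε] with ℓ h3 h4
    linarith [key ℓ h3]
  · have hH : ∀ k, ∀ ε > 0, ∀ᶠ N in atTop,
        Real.binEntropy (G k N) ≤ Real.binEntropy (g k) + ε := by
      intro k ε hε
      obtain ⟨δ, hδ, h⟩ := Metric.continuousAt_iff.1
        (Real.binEntropy_continuous.continuousAt (x := g k)) ε hε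
      filter_upwards [ls_ev (h1 k) hδ] with N hN
      rcases le_total (G k N) (g k) with hc | hc
      · have := Real.binEntropy_strictMonoOn.monotoneOn ⟨h0 k N, h1 k N⟩ ⟨hg0 k, hg1 k⟩ hc
        linarith
      · have h5 : G k N < g k + δ := hN
        have := h (x := G k N) (by rw [Real.dist_eq, abs_lt]; constructor <;> linarith)
        rw [Real.dist_eq, abs_lt] at this
        linarith
    have key : ∀ ℓ, a ℓ ≤ (ℓ : ℝ)⁻¹ * ∑ k ∈ Finset.range ℓ, Real.binEntropy (g k) / Real.log 2 := by
      intro ℓ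
      refine le_of_forall_pos_le_add fun ε hε => ls_le (hs0 ℓ) ?_
      rcases Nat.eq_zero_or_pos ℓ with rfl | hℓ
      · simp [hs, hε.le]
      have hℓ' : (0 : ℝ) < ℓ := by exact_mod_cast hℓ
      have := (Filter.eventually_all_finset (Finset.range ℓ)).2 fun k _ =>
        hH k (ε * Real.log 2) (by positivity)
      filter_upwards [this] with N hN
      simp only [hs]
      rw [one_div, inv_mul_le_iff₀ hℓ', mul_add, ← mul_assoc, mul_inv_cancel₀ hℓ'.ne', one_mul,
        ← Finset.sum_div, div_le_iff₀ hlog, add_mul, div_mul_cancel₀ _ hlog.ne']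
      calc _ ≤ ∑ k ∈ Finset.range ℓ, (Real.binEntropy (g k) + ε * Real.log 2) :=
            Finset.sum_le_sum fun k hk => (hu k N).trans (hN k hk)
        _ = _ := by rw [Finset.sum_add_distrib]; simp; ring
    have h2 : Tendsto (fun k => Real.binEntropy (g k) / Real.log 2) atTop
        (𝓝 (Real.binEntropy γ / Real.log 2)) :=
      ((Real.binEntropy_continuous.tendsto γ).comp htend).div_const _
    refine le_of_forall_pos_le_add fun ε hε => ls_le ha0 ?_
    filter_upwards [h2.cesaro.eventually_lt_const (lt_add_of_pos_right _ hε)] with ℓ h3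
    exact (key ℓ).trans h3.le

/-! Entropy inequalities. -/

lemma two_mul_le_binEntropy {p : ℝ} (h0 : 0 ≤ p) (h1 : p ≤ 2⁻¹) :
    2 * Real.log 2 * p ≤ Real.binEntropy p := by
  have h := Real.strictConcave_binEntropy.concaveOn.2 (show (0 : ℝ) ∈ Set.Icc (0 : ℝ) 1 by simp)
    (show (2⁻¹ : ℝ) ∈ Set.Icc (0 : ℝ) 1 by norm_num)
    (show 0 ≤ 1 - 2 * p by linarith) (show 0 ≤ 2 * p by linarith) (by ring)
  simp only [smul_eq_mul, mul_zero, Real.binEntropy_zero, Real.binEntropy_two_inv, zero_add] at h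
  rw [show 2 * p * 2⁻¹ = p by ring] at h
  linarith

/-- Entropy increment when a mass splits into `p` and `q`. -/
noncomputable def entInc (p q : ℝ) : ℝ :=
  Real.negMulLog p + Real.negMulLog q - Real.negMulLog (p + q)

lemma entInc_eq {p q : ℝ} (hp : 0 ≤ p) (hq : 0 ≤ q) :
    entInc p q = (p + q) * Real.binEntropy (min p q / (p + q)) := by
  have main : ∀ p q : ℝ, 0 ≤ p → 0 ≤ q → 
      entInc p q = (p + q) * Real.binEntropy (p / (p + q)) := by
    intro p q hp hq
    rcases hp.eq_or_lt with rfl | hp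
    · simp [entInc]
    rcases hq.eq_or_lt with rfl | hq
    · simp [entInc, hp.ne']
    have hpq : 0 < p + q := by positivity
    have e : 1 - p / (p + q) = q / (p + q) := by field_simp; ring
    rw [Real.binEntropy_eq_negMulLog_add_negMulLog_one_sub, e]
    simp only [entInc, Real.negMulLog]
    rw [Real.log_div hp.ne' hpq.ne', Real.log_div hq.ne' hpq.ne']
    field_simp
    ring
  rcases le_total p q with h | h
  · rw [min_eq_left h, main p q hp hq]
  · rw [min_eq_right h, add_comm p q, ← main q p hq hp]
    simp [entInc, add_comm]

lemma entInc_ge {p q : ℝ} (hp : 0 ≤ p) (hq : 0 ≤ q) :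
    2 * Real.log 2 * min p q ≤ entInc p q := by
  rw [entInc_eq hp hq]
  rcases (add_nonneg hp hq).eq_or_lt with h | h
  · have : min p q ≤ 0 := by
      rcases min_le_iff.2 (Or.inl (le_refl p)) with h'; linarith
    have h2 : min p q = 0 := le_antisymm this (le_min hp hq)
    simp [← h, h2]
  · have hb : min p q / (p + q) ≤ 2⁻¹ := by
      rw [div_le_iff₀ h]
      linarith [min_le_left p q, min_le_right p q]
    have := two_mul_le_binEntropy (div_nonneg (le_min hp hq) h.le) hb
    calc _ = (p + q) * (2 * Real.log 2 * (min p q / (p + q))) := by field_simp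
      _ ≤ _ := by gcongr

lemma sum_entInc_le {ι : Type*} [Fintype ι] {p q : ι → ℝ} (hp : ∀ i, 0 ≤ p i) (hq : ∀ i, 0 ≤ q i)
    (hsum : ∑ i, (p i + q i) = 1) :
    ∑ i, entInc (p i) (q i) ≤ Real.binEntropy (∑ i, min (p i) (q i)) := by
  have h := Real.strictConcave_binEntropy.concaveOn.le_map_sum (t := Finset.univ)
    (w := fun i => p i + q i) (p := fun i => min (p i) (q i) / (p i + q i))
    (fun i _ => add_nonneg (hp i) (hq i)) hsum (fun i _ => by
      have := add_nonneg (hp i) (hq i)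
      refine ⟨div_nonneg (le_min (hp i) (hq i)) this, div_le_one_of_le₀ ?_ this⟩
      exact (min_le_left _ _).trans (by linarith [hq i]))
  simp only [smul_eq_mul] at h
  have e : ∀ i, (p i + q i) * (min (p i) (q i) / (p i + q i)) = min (p i) (q i) := by
    intro i
    by_cases h0 : p i + q i = 0
    swap
    · field_simp
    have hp0 : p i = 0 := by linarith [hp i, hq i]
    have hq0 : q i = 0 := by linarith [hp i, hq i]
    simp [hp0, hq0]
  simp only [e] at h
  refine le_trans (le_of_eq ?_) h
  exact Finset.sum_congr rfl fun i _ => entInc_eq (hp i) (hq i)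

/-! Window counts. -/

/-- Number of windows of length `ℓ` starting at a position `< N` that are equal to `u`. -/
def cnt (x : ℕ → Bool) (ℓ N : ℕ) (u : Fin ℓ → Bool) : ℕ :=
  ((Finset.range N).filter (fun i => (fun j : Fin ℓ => x (i + j)) = u)).card

/-- Frequency of the window `u`. -/
noncomputable def fr (x : ℕ → Bool) (ℓ N : ℕ) (u : Fin ℓ → Bool) : ℝ := (cnt x ℓ N u : ℝ) / N

/-- Entropy (in nats) of the window distribution. -/
noncomputable def wS (x : ℕ → Bool) (ℓ N : ℕ) : ℝ := ∑ u : Fin ℓ → Bool, Real.negMulLog (fr x ℓ N u)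

/-- Number of prediction errors. -/
def errs (x : ℕ → Bool) (ℓ N : ℕ) (f : (Fin ℓ → Bool) → Bool) : ℕ :=
  ((Finset.range N).filter (fun i => x (i + ℓ) ≠ f (fun j : Fin ℓ => x (i + j)))).card

/-- Extension of a word by a letter. -/
def ext (ℓ : ℕ) (u : Fin ℓ → Bool) (b : Bool) : Fin (ℓ + 1) → Bool :=
  Fin.snoc (α := fun _ => Bool) u b

/-- Normalized sum of minima. -/
noncomputable def wG (x : ℕ → Bool) (ℓ N : ℕ) : ℝ :=
  ∑ u : Fin ℓ → Bool, min (fr x (ℓ + 1) N (ext ℓ u true)) (fr x (ℓ + 1) N (ext ℓ u false))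

/-- Conditional entropy. -/
noncomputable def wH (x : ℕ → Bool) (ℓ N : ℕ) : ℝ :=
  ∑ u : Fin ℓ → Bool, entInc (fr x (ℓ + 1) N (ext ℓ u true)) (fr x (ℓ + 1) N (ext ℓ u false))

lemma fr_nonneg (x : ℕ → Bool) (ℓ N : ℕ) (u : Fin ℓ → Bool) : 0 ≤ fr x ℓ N u := by
  unfold fr; positivity

lemma sum_ext (ℓ : ℕ) (F : (Fin (ℓ + 1) → Bool) → ℝ) :
    ∑ v, F v = ∑ u, (F (ext ℓ u true) + F (ext ℓ u false)) := by
  rw [← (Fin.snocEquiv (fun _ : Fin (ℓ + 1) => Bool)).sum_comp, Fintype.sum_prod_type,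
    Fintype.sum_bool, ← Finset.sum_add_distrib]
  rfl

lemma window_eq_ext (x : ℕ → Bool) (ℓ i : ℕ) (u : Fin ℓ → Bool) (b : Bool) :
    (fun j : Fin (ℓ + 1) => x (i + j)) = ext ℓ u b ↔
      (fun j : Fin ℓ => x (i + j)) = u ∧ x (i + ℓ) = b := by
  constructor
  · intro h
    constructor
    · funext j
      have := congrFun h j.castSucc
      simpa [ext] using this
    · have := congrFun h (Fin.last ℓ)
      simpa [ext] using this
  · rintro ⟨rfl, rfl⟩
    funext j
    refine Fin.lastCases ?_ (fun j => ?_) j <;> simp [ext]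

lemma cnt_split (x : ℕ → Bool) (ℓ N : ℕ) (u : Fin ℓ → Bool) :
    cnt x ℓ N u = cnt x (ℓ + 1) N (ext ℓ u true) + cnt x (ℓ + 1) N (ext ℓ u false) := by
  unfold cnt
  simp only [window_eq_ext]
  rw [← Finset.card_filter_add_card_filter_not (s := Finset.filter _ _) (fun i => x (i + ℓ) = true),
    Finset.filter_filter, Finset.filter_filter]
  simp only [Bool.not_eq_true]

lemma fr_split (x : ℕ → Bool) (ℓ N : ℕ) (u : Fin ℓ → Bool) :
    fr x ℓ N u = fr x (ℓ + 1) N (ext ℓ u true) + fr x (ℓ + 1) N (ext ℓ u false) := by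
  unfold fr
  rw [cnt_split, Nat.cast_add, add_div]

lemma sum_cnt (x : ℕ → Bool) (ℓ N : ℕ) : ∑ u, cnt x ℓ N u = N := by
  unfold cnt
  rw [← Finset.card_eq_sum_card_fiberwise (fun _ _ => Finset.mem_coe.2 (Finset.mem_univ _))]
  simp

lemma sum_fr (x : ℕ → Bool) (ℓ N : ℕ) (hN : N ≠ 0) : ∑ u, fr x ℓ N u = 1 := by
  unfold fr
  rw [← Finset.sum_div, ← Nat.cast_sum, sum_cnt, div_self (by exact_mod_cast hN)]

lemma wS_zero (x : ℕ → Bool) (N : ℕ) : wS x 0 N = 0 := by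
  rcases Nat.eq_zero_or_pos N with rfl | hN
  · simp [wS, fr]
  · have h := sum_fr x 0 N hN.ne'
    unfold wS
    rw [Fintype.sum_unique] at h ⊢
    rw [h]; simp

lemma wS_succ (x : ℕ → Bool) (ℓ N : ℕ) : wS x (ℓ + 1) N = wS x ℓ N + wH x ℓ N := by
  unfold wS wH
  rw [sum_ext, ← Finset.sum_add_distrib]
  refine Finset.sum_congr rfl fun u _ => ?_
  rw [fr_split x ℓ N u, entInc]; ring

lemma wS_eq (x : ℕ → Bool) (ℓ N : ℕ) : wS x ℓ N = ∑ k ∈ Finset.range ℓ, wH x k N := by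
  induction ℓ with
  | zero => simp [wS_zero]
  | succ m ih => rw [wS_succ, ih, Finset.sum_range_succ]

lemma wG_nonneg (x : ℕ → Bool) (ℓ N : ℕ) : 0 ≤ wG x ℓ N :=
  Finset.sum_nonneg fun _ _ => le_min (fr_nonneg _ _ _ _) (fr_nonneg _ _ _ _)

lemma wG_le (x : ℕ → Bool) (ℓ N : ℕ) : wG x ℓ N ≤ 2⁻¹ := by
  rcases Nat.eq_zero_or_pos N with rfl | hN
  · simp [wG, fr]
  · have h := sum_fr x ℓ N hN.ne'
    have h2 : wG x ℓ N ≤ ∑ u, fr x ℓ N u / 2 := by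
      refine Finset.sum_le_sum fun u _ => ?_
      rw [fr_split x ℓ N u]
      linarith [min_le_left (fr x (ℓ + 1) N (ext ℓ u true)) (fr x (ℓ + 1) N (ext ℓ u false)),
        min_le_right (fr x (ℓ + 1) N (ext ℓ u true)) (fr x (ℓ + 1) N (ext ℓ u false))]
    rw [← Finset.sum_div, h] at h2
    linarith

lemma wH_ge (x : ℕ → Bool) (ℓ N : ℕ) : 2 * Real.log 2 * wG x ℓ N ≤ wH x ℓ N := by
  unfold wG wH
  rw [Finset.mul_sum]
  exact Finset.sum_le_sum fun u _ => entInc_ge (fr_nonneg _ _ _ _) (fr_nonneg _ _ _ _)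

lemma wH_le (x : ℕ → Bool) (ℓ N : ℕ) : wH x ℓ N ≤ Real.binEntropy (wG x ℓ N) := by
  rcases Nat.eq_zero_or_pos N with rfl | hN
  · simp [wG, wH, fr, entInc]
  · refine sum_entInc_le (fun _ => fr_nonneg _ _ _ _) (fun _ => fr_nonneg _ _ _ _) ?_
    simp only [← fr_split]
    exact sum_fr x ℓ N hN.ne'

lemma errs_eq (x : ℕ → Bool) (ℓ N : ℕ) (f : (Fin ℓ → Bool) → Bool) :
    errs x ℓ N f = ∑ u, cnt x (ℓ + 1) N (ext ℓ u (!f u)) := by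
  unfold errs
  rw [Finset.card_eq_sum_card_fiberwise (f := fun i => fun j : Fin ℓ => x (i + j))
    (fun _ _ => Finset.mem_coe.2 (Finset.mem_univ _))]
  refine Finset.sum_congr rfl fun u _ => ?_
  unfold cnt
  rw [Finset.filter_filter]
  congr 1
  ext i
  simp only [Finset.mem_filter, window_eq_ext, and_congr_right_iff]
  intro _
  constructor
  · rintro ⟨h1, h2⟩
    refine ⟨h2, ?_⟩
    rw [h2] at h1
    revert h1
    cases x (i + ℓ) <;> cases f u <;> simp
  · rintro ⟨h1, h2⟩
    refine ⟨?_, h1⟩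
    rw [h1, h2]
    cases f u <;> simp

lemma wG_le_errs (x : ℕ → Bool) (ℓ N : ℕ) (f : (Fin ℓ → Bool) → Bool) :
    wG x ℓ N ≤ (errs x ℓ N f : ℝ) / N := by
  rw [errs_eq, Nat.cast_sum, Finset.sum_div]
  refine Finset.sum_le_sum fun u _ => ?_
  cases f u
  · exact min_le_left _ _
  · exact min_le_right _ _

lemma exists_wG_eq (x : ℕ → Bool) (ℓ N : ℕ) : ∃ f, wG x ℓ N = (errs x ℓ N f : ℝ) / N := by
  refine ⟨fun u => decide (fr x (ℓ + 1) N (ext ℓ u false) ≤ fr x (ℓ + 1) N (ext ℓ u true)), ?_⟩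
  rw [errs_eq, Nat.cast_sum, Finset.sum_div]
  refine Finset.sum_congr rfl fun u _ => ?_
  by_cases h : fr x (ℓ + 1) N (ext ℓ u false) ≤ fr x (ℓ + 1) N (ext ℓ u true)
  · simp only [h, min_eq_right, decide_true, Bool.not_true]; rfl
  · rw [min_eq_left (le_of_not_ge h)]
    simp only [h, decide_false, Bool.not_false]; rfl

lemma wG_succ_le (x : ℕ → Bool) (ℓ N : ℕ) : wG x (ℓ + 1) N ≤ wG x ℓ N + 1 / (N : ℝ) := by
  obtain ⟨f, hf⟩ := exists_wG_eq x ℓ N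
  refine (wG_le_errs x (ℓ + 1) N (fun v => f (fun j => v j.succ))).trans ?_
  rw [hf, ← add_div]
  have : errs x (ℓ + 1) N (fun v => f (fun j => v j.succ)) ≤ errs x ℓ N f + 1 := by
    calc _ ≤ errs x ℓ (N + 1) f := by
          unfold errs
          refine Finset.card_le_card_of_injOn (fun i => i + 1) ?_ (by intro a _ b _ h; simpa using h)
          intro i hi
          simp only [Finset.coe_filter, Finset.mem_range, Set.mem_ofPred_eq] at hi ⊢
          refine ⟨by omega, ?_⟩
          have h2 := hi.2
          simp only [Fin.val_succ] at h2
          simpa only [add_assoc, add_comm, add_left_comm] using h2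
      _ ≤ _ := by
          unfold errs
          rw [Finset.range_add_one, Finset.filter_insert]
          split_ifs
          · exact Finset.card_insert_le _ _
          · omega
  gcongr
  exact_mod_cast this

lemma gammaWord_eq (x : ℕ → Bool) (ℓ N : ℕ) : gammaWord ℓ x (N + ℓ) = wG x ℓ N := by
  have e : ∀ f : (Fin ℓ → Bool) → Bool, ((Finset.Ico ℓ (N + ℓ)).filter
        (fun i => x i ≠ f (fun j => x (i - ℓ + j)))).card = errs x ℓ N f := by
    intro f
    unfold errs
    symm
    refine Finset.card_bij (fun i _ => i + ℓ) ?_ (by intro a _ b _ h; simpa using h) ?_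
    · intro i hi
      simpa using hi
    · intro i hi
      simp only [Finset.mem_filter, Finset.mem_Ico] at hi
      refine ⟨i - ℓ, ?_, by omega⟩
      simp only [Finset.mem_filter, Finset.mem_range]
      refine ⟨by omega, ?_⟩
      rw [Nat.sub_add_cancel hi.1.1]
      exact hi.2
  unfold gammaWord
  simp only [e]
  obtain ⟨f, hf⟩ := exists_wG_eq x ℓ N
  push_cast
  rw [add_sub_cancel_right, one_div]
  rcases Nat.eq_zero_or_pos N with rfl | hN
  · rw [hf]; simp
  have hN' : (0 : ℝ) < N := by exact_mod_cast hN
  apply le_antisymm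
  · rw [hf, div_eq_inv_mul]
    gcongr
    exact Finset.inf'_le _ (Finset.mem_univ f)
  · rw [le_inv_mul_iff₀ hN']
    refine Finset.le_inf' _ _ fun f' _ => ?_
    have := wG_le_errs x ℓ N f'
    rw [le_div_iff₀ hN'] at this
    linarith

lemma hBlock_eq (x : ℕ → Bool) (ℓ N : ℕ) :
    hBlock ℓ x (N + ℓ) = (1 / (ℓ : ℝ)) * (wS x ℓ (N + 1) / Real.log 2) := by
  have e : ∀ u : Fin ℓ → Bool, occ x (N + ℓ) (List.ofFn u) = cnt x ℓ (N + 1) u := by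
    intro u
    unfold occ cnt factor
    rw [List.length_ofFn, show N + ℓ + 1 - ℓ = N + 1 by omega]
    simp only [List.ofFn_inj]
  unfold hBlock wS fr
  simp only [e]
  push_cast
  rw [add_sub_cancel_right, neg_mul, ← mul_neg, ← Finset.sum_neg_distrib, Finset.sum_div]
  congr 1
  refine Finset.sum_congr rfl fun u _ => ?_
  rw [Real.negMulLog, Real.logb]
  ring

lemma gammaUp_eq (x : ℕ → Bool) :
    gammaUp x = atTop.limsup fun ℓ => atTop.limsup fun N => wG x ℓ N := by
  unfold gammaUp
  congr 1
  funext ℓ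
  rw [← limsup_nat_add _ ℓ]
  simp only [gammaWord_eq]

lemma hUp_eq (x : ℕ → Bool) :
    hUp x = atTop.limsup fun ℓ : ℕ => atTop.limsup fun N =>
      (1 / (ℓ : ℝ)) * ((∑ k ∈ Finset.range ℓ, wH x k N) / Real.log 2) := by
  unfold hUp
  congr 1
  funext ℓ
  rw [← limsup_nat_add _ ℓ, ← limsup_nat_add (fun N =>
      (1 / (ℓ : ℝ)) * ((∑ k ∈ Finset.range ℓ, wH x k N) / Real.log 2)) 1]
  simp only [hBlock_eq, wS_eq]

lemma binEntropy_eq' (a : ℝ) : binEntropy a = Real.binEntropy a / Real.log 2 := by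
  rw [Real.binEntropy_eq_negMulLog_add_negMulLog_one_sub]
  unfold binEntropy Real.negMulLog Real.logb
  ring

end RauzyAux

theorem rauzy_upper_gamma_limsup (x : ℕ → Bool) :
    2 * gammaUp x ≤ hUp x ∧ hUp x ≤ binEntropy (gammaUp x) := by
  rw [binEntropy_eq', gammaUp_eq, hUp_eq]
  exact rauzy_abstract (wG x) (wH x) (wG_nonneg x) (wG_le x) (wG_succ_le x) (wH_ge x) (wH_le x)
end

section
/- For every infinite binary sequence x ∈ B^ℕ, 2·β̲(x) ≤ h̲(x) ≤ H(β̲(x)). -/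
open Filter Topology

namespace Rauzy

/-- word of length `ℓ` at position `i` -/
def word (x : ℕ → Bool) (ℓ i : ℕ) : Fin ℓ → Bool := fun j => x (i + j)

/-- count of positions below `n` where `u` starts -/
def cnt (x : ℕ → Bool) (n ℓ : ℕ) (u : Fin ℓ → Bool) : ℕ :=
  ((Finset.range n).filter (fun i => word x ℓ i = u)).card

/-- frequency of `b v` -/
noncomputable def fr (x : ℕ → Bool) (n ℓ : ℕ) (b : Bool) (v : Fin ℓ → Bool) : ℝ :=
  (cnt x n (ℓ + 1) (Fin.cons b v) : ℝ) / n

/-- entropy of blocks -/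
noncomputable def E (x : ℕ → Bool) (n ℓ : ℕ) : ℝ :=
  ∑ u : Fin ℓ → Bool, Real.negMulLog ((cnt x n ℓ u : ℝ) / n)

/-- conditional entropy -/
noncomputable def D (x : ℕ → Bool) (n ℓ : ℕ) : ℝ :=
  ∑ v : Fin ℓ → Bool, (Real.negMulLog (fr x n ℓ false v) + Real.negMulLog (fr x n ℓ true v)
    - Real.negMulLog (fr x n ℓ false v + fr x n ℓ true v))

/-- minimal number of errors -/
noncomputable def M (x : ℕ → Bool) (ℓ N : ℕ) : ℝ :=
  ((Finset.univ : Finset ((Fin ℓ → Bool) → Bool)).inf' Finset.univ_nonempty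
      (fun f => ((((Finset.range N).filter
        (fun i => x i ≠ f (fun j => x (i + 1 + j)))).card : ℝ))))

/-- normalized errors -/
noncomputable def B (x : ℕ → Bool) (n ℓ : ℕ) : ℝ := M x ℓ n / n

/-- normalized sum of conditional entropies -/
noncomputable def G (x : ℕ → Bool) (n ℓ : ℕ) : ℝ :=
  (∑ k ∈ Finset.range ℓ, D x n k) / (ℓ * Real.log 2)

theorem word_succ (x : ℕ → Bool) (ℓ i : ℕ) :
    word x (ℓ + 1) i = Fin.cons (x i) (word x ℓ (i + 1)) := by
  funext j
  refine Fin.cases ?_ (fun j => ?_) j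
  · simp [word]
  · simp [word, Nat.add_assoc, Nat.add_comm 1]

theorem cnt_cons (x : ℕ → Bool) (n ℓ : ℕ) (b : Bool) (v : Fin ℓ → Bool) :
    cnt x n (ℓ + 1) (Fin.cons b v) =
      ((Finset.range n).filter (fun i => word x ℓ (i + 1) = v ∧ x i = b)).card := by
  unfold cnt
  congr 1
  ext i
  simp only [Finset.mem_filter, word_succ, Fin.cons_inj]
  tauto

theorem cnt_le (x : ℕ → Bool) (n ℓ : ℕ) (u) : cnt x n ℓ u ≤ n := by
  unfold cnt
  exact (Finset.card_filter_le _ _).trans (by simp)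

theorem fr_nonneg (x : ℕ → Bool) (n ℓ : ℕ) (b v) : 0 ≤ fr x n ℓ b v := by
  unfold fr; positivity

/-- shifted count -/
def cnt1 (x : ℕ → Bool) (n ℓ : ℕ) (u : Fin ℓ → Bool) : ℕ :=
  ((Finset.range n).filter (fun i => word x ℓ (i + 1) = u)).card

theorem cnt1_eq (x : ℕ → Bool) (n ℓ : ℕ) (v : Fin ℓ → Bool) :
    cnt x n (ℓ + 1) (Fin.cons false v) + cnt x n (ℓ + 1) (Fin.cons true v) = cnt1 x n ℓ v := by
  rw [cnt_cons, cnt_cons, cnt1, ← Finset.card_union_of_disjoint]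
  · congr 1
    ext i
    simp only [Finset.mem_union, Finset.mem_filter]
    cases x i <;> simp
  · rw [Finset.disjoint_filter]
    rintro i - h1 h2
    simp_all

theorem fr_add (x : ℕ → Bool) (n ℓ : ℕ) (v : Fin ℓ → Bool) :
    fr x n ℓ false v + fr x n ℓ true v = (cnt1 x n ℓ v : ℝ) / n := by
  rw [← cnt1_eq]; unfold fr; push_cast; ring

theorem cnt1_cnt (x : ℕ → Bool) (n ℓ : ℕ) (v : Fin ℓ → Bool) :
    |(cnt x n ℓ v : ℝ) - cnt1 x n ℓ v| ≤ 1 := by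
  have h : cnt x n ℓ v + (if word x ℓ n = v then 1 else 0)
      = cnt1 x n ℓ v + (if word x ℓ 0 = v then 1 else 0) := by
    simp only [cnt, cnt1, Finset.card_filter]
    rw [← Finset.sum_range_succ (fun i => if word x ℓ i = v then 1 else 0),
      Finset.sum_range_succ']
  have h' : (cnt x n ℓ v : ℝ) + (if word x ℓ n = v then 1 else 0)
      = cnt1 x n ℓ v + (if word x ℓ 0 = v then 1 else 0) := by exact_mod_cast h
  rw [abs_le]
  split_ifs at h' <;> constructor <;> linarith

theorem sum_cnt1 (x : ℕ → Bool) (n ℓ : ℕ) : ∑ v, cnt1 x n ℓ v = n := by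
  unfold cnt1
  have := Finset.card_eq_sum_card_fiberwise (s := Finset.range n) (t := Finset.univ)
    (f := fun i => word x ℓ (i + 1)) (by simp)
  simpa using this.symm

theorem sum_fr (x : ℕ → Bool) (n ℓ : ℕ) (hn : 0 < n) :
    ∑ v, (fr x n ℓ false v + fr x n ℓ true v) = 1 := by
  simp_rw [fr_add]
  rw [← Finset.sum_div, ← Nat.cast_sum, sum_cnt1]
  have : (n : ℝ) ≠ 0 := by positivity
  field_simp

theorem M_eq (x : ℕ → Bool) (ℓ n : ℕ) :
    M x ℓ n = ∑ v : Fin ℓ → Bool, min (cnt x n (ℓ + 1) (Fin.cons false v) : ℝ)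
      (cnt x n (ℓ + 1) (Fin.cons true v)) := by
  have key : ∀ f : (Fin ℓ → Bool) → Bool,
      ((((Finset.range n).filter (fun i => x i ≠ f (fun j => x (i + 1 + j)))).card : ℝ))
        = ∑ v, (cnt x n (ℓ + 1) (Fin.cons (!f v) v) : ℝ) := by
    intro f
    rw [← Nat.cast_sum]
    congr 1
    rw [Finset.card_eq_sum_card_fiberwise (t := Finset.univ)
      (f := fun i => word x ℓ (i + 1)) (by simp)]
    refine Finset.sum_congr rfl fun v _ => ?_
    rw [cnt_cons, Finset.filter_filter]
    congr 1
    ext i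
    simp only [Finset.mem_filter]
    refine and_congr_right fun _ => ?_
    constructor
    · rintro ⟨h1, h2⟩
      refine ⟨h2, ?_⟩
      subst h2
      change x i ≠ f (word x ℓ (i + 1)) at h1
      revert h1
      cases x i <;> cases f (word x ℓ (i + 1)) <;> simp
    · rintro ⟨h2, h1⟩
      refine ⟨?_, h2⟩
      subst h2
      change x i ≠ f (word x ℓ (i + 1))
      revert h1
      cases x i <;> cases f (word x ℓ (i + 1)) <;> simp
  unfold M
  simp_rw [key]
  apply le_antisymm
  · refine (Finset.inf'_le _ (Finset.mem_univ (fun v =>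
      decide (cnt x n (ℓ + 1) (Fin.cons false v) ≤ cnt x n (ℓ + 1) (Fin.cons true v))))).trans ?_
    refine Finset.sum_le_sum fun v _ => ?_
    by_cases h : cnt x n (ℓ + 1) (Fin.cons false v) ≤ cnt x n (ℓ + 1) (Fin.cons true v)
    · simp [h]
    · simp [h]; omega
  · refine Finset.le_inf' _ _ fun f _ => Finset.sum_le_sum fun v _ => ?_
    cases f v <;> simp

theorem B_eq (x : ℕ → Bool) (n ℓ : ℕ) :
    B x n ℓ = ∑ v : Fin ℓ → Bool, min (fr x n ℓ false v) (fr x n ℓ true v) := by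
  rw [B, M_eq, Finset.sum_div]
  refine Finset.sum_congr rfl fun v _ => ?_
  rw [fr, fr, min_div_div_right (by positivity)]

theorem B_nonneg (x : ℕ → Bool) (n ℓ : ℕ) : 0 ≤ B x n ℓ := by
  rw [B_eq]
  exact Finset.sum_nonneg fun v _ => le_min (fr_nonneg ..) (fr_nonneg ..)

theorem B_le (x : ℕ → Bool) (n ℓ : ℕ) : B x n ℓ ≤ 1 / 2 := by
  rcases Nat.eq_zero_or_pos n with h | h
  · subst h; simp [B]
  · have := sum_fr x n ℓ h
    rw [B_eq]
    have : ∑ v : Fin ℓ → Bool, min (fr x n ℓ false v) (fr x n ℓ true v) ≤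
        ∑ v, (fr x n ℓ false v + fr x n ℓ true v) / 2 :=
      Finset.sum_le_sum fun v _ => by
        rcases min_cases (fr x n ℓ false v) (fr x n ℓ true v) with h | h <;> linarith
    rw [← Finset.sum_div] at this
    linarith

theorem B_anti (x : ℕ → Bool) (n : ℕ) : Antitone (B x n) := by
  refine antitone_nat_of_succ_le fun ℓ => ?_
  unfold B
  refine div_le_div_of_nonneg_right ?_ (by positivity)
  unfold M
  refine Finset.le_inf' _ _ fun f _ => ?_
  exact Finset.inf'_le (fun f : (Fin (ℓ + 1) → Bool) → Bool => ((((Finset.range n).filter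
        (fun i => x i ≠ f (fun j => x (i + 1 + j)))).card : ℝ)))
      (Finset.mem_univ (fun w => f (fun j => w j.castSucc)))

theorem M_close (x : ℕ → Bool) (ℓ n : ℕ) : |M x ℓ n - M x ℓ (n - ℓ)| ≤ ℓ := by
  rw [abs_le]
  constructor
  · have : M x ℓ (n - ℓ) ≤ M x ℓ n := by
      unfold M
      refine Finset.le_inf' _ _ fun f _ => (Finset.inf'_le _ (Finset.mem_univ f)).trans ?_
      norm_cast
      refine Finset.card_le_card (Finset.filter_subset_filter _ ?_)
      exact Finset.range_mono (by omega)
    have : (0 : ℝ) ≤ ℓ := by positivity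
    linarith
  · rw [sub_le_iff_le_add']
    rw [← sub_le_iff_le_add]
    conv_rhs => unfold M
    refine Finset.le_inf' _ _ fun f _ => ?_
    rw [sub_le_iff_le_add]
    refine (Finset.inf'_le _ (Finset.mem_univ f)).trans ?_
    norm_cast
    have : Finset.range n ⊆ Finset.range (n - ℓ) ∪ Finset.Ico (n - ℓ) n := by
      intro i; simp; omega
    refine (Finset.card_le_card (Finset.filter_subset_filter _ this)).trans ?_
    rw [Finset.filter_union]
    refine (Finset.card_union_le _ _).trans ?_
    gcongr
    refine (Finset.card_filter_le _ _).trans ?_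
    simp; omega

/-! ### analytic part -/

theorem bin_id (a b : ℝ) (ha : 0 ≤ a) (hb : 0 ≤ b) :
    Real.negMulLog a + Real.negMulLog b - Real.negMulLog (a + b)
      = (a + b) * Real.binEntropy (a / (a + b)) := by
  rcases ha.eq_or_lt with h | h
  · subst h; simp
  rcases hb.eq_or_lt with h' | h'
  · subst h'; simp [h.ne']
  have hs : 0 < a + b := by positivity
  have : 1 - a / (a + b) = b / (a + b) := by field_simp; ring
  rw [Real.binEntropy_eq_negMulLog_add_negMulLog_one_sub, this]
  simp only [Real.negMulLog, Real.log_div h.ne' hs.ne', Real.log_div h'.ne' hs.ne']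
  field_simp
  ring

theorem bin_id' (a b : ℝ) (ha : 0 ≤ a) (hb : 0 ≤ b) :
    Real.negMulLog a + Real.negMulLog b - Real.negMulLog (a + b)
      = (a + b) * Real.binEntropy (min a b / (a + b)) := by
  rcases le_total a b with h | h
  · rw [min_eq_left h, bin_id a b ha hb]
  · rw [min_eq_right h, add_comm a b, ← bin_id b a hb ha]; ring

theorem two_mul_le_bin (p : ℝ) (h0 : 0 ≤ p) (h1 : p ≤ 1 / 2) :
    2 * Real.log 2 * p ≤ Real.binEntropy p := by
  have hc := Real.strictConcave_binEntropy.concaveOn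
  have h2 := hc.2
  have := @h2 0 (by simp) 2⁻¹ (by constructor <;> norm_num)
    (1 - 2 * p) (2 * p) (by linarith) (by linarith) (by ring)
  simp only [smul_eq_mul, Real.binEntropy_zero, Real.binEntropy_two_inv] at this
  have e : (1 - 2 * p) * 0 + 2 * p * 2⁻¹ = p := by ring
  rw [e] at this
  linarith

theorem D_lower (x : ℕ → Bool) (n ℓ : ℕ) : 2 * Real.log 2 * B x n ℓ ≤ D x n ℓ := by
  rw [B_eq, D, Finset.mul_sum]
  refine Finset.sum_le_sum fun v _ => ?_
  have ha := fr_nonneg x n ℓ false v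
  have hb := fr_nonneg x n ℓ true v
  generalize fr x n ℓ false v = a at *
  generalize fr x n ℓ true v = b at *
  rw [bin_id' a b ha hb]
  have hm := le_min ha hb
  have hm2 : min a b ≤ (a + b) / 2 := by
    rcases min_cases a b with h | h <;> linarith
  rcases (add_nonneg ha hb).eq_or_lt with h | h
  · have : min a b = 0 := by linarith
    simp [this]
  · have := two_mul_le_bin (min a b / (a + b)) (by positivity)
      (by rw [div_le_iff₀ h]; linarith)
    calc _ = (a + b) * (2 * Real.log 2 * (min a b / (a + b))) := by field_simp
      _ ≤ _ := by gcongr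

theorem D_upper (x : ℕ → Bool) (n ℓ : ℕ) (hn : 0 < n) :
    D x n ℓ ≤ Real.binEntropy (B x n ℓ) := by
  have hc := Real.strictConcave_binEntropy.concaveOn
  have h := hc.le_map_sum (t := Finset.univ)
    (w := fun v => fr x n ℓ false v + fr x n ℓ true v)
    (p := fun v => min (fr x n ℓ false v) (fr x n ℓ true v) /
      (fr x n ℓ false v + fr x n ℓ true v))
    (fun v _ => add_nonneg (fr_nonneg ..) (fr_nonneg ..)) (sum_fr x n ℓ hn) ?_
  · rw [B_eq]
    refine Eq.trans_le ?_ (h.trans_eq ?_)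
    · refine Finset.sum_congr rfl fun v _ => ?_
      rw [bin_id' _ _ (fr_nonneg ..) (fr_nonneg ..), smul_eq_mul]
    · congr 1
      refine Finset.sum_congr rfl fun v _ => ?_
      have ha := fr_nonneg x n ℓ false v
      have hb := fr_nonneg x n ℓ true v
      generalize fr x n ℓ false v = a at *
      generalize fr x n ℓ true v = b at *
      have hm := le_min ha hb
      have hm2 : min a b ≤ (a + b) / 2 := by
        rcases min_cases a b with h | h <;> linarith
      rw [smul_eq_mul]
      rcases (add_nonneg ha hb).eq_or_lt with h | h
      · have : min a b = 0 := by linarith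
        simp [this]
      · field_simp
  · intro v _
    have ha := fr_nonneg x n ℓ false v
    have hb := fr_nonneg x n ℓ true v
    have hm := le_min ha hb
    refine ⟨by positivity, div_le_one_of_le₀ ?_ (by positivity)⟩
    exact (min_le_left _ _).trans (by linarith)

theorem D_le_log (x : ℕ → Bool) (n ℓ : ℕ) (hn : 0 < n) : D x n ℓ ≤ Real.log 2 :=
  (D_upper x n ℓ hn).trans Real.binEntropy_le_log_two

theorem D_nonneg (x : ℕ → Bool) (n ℓ : ℕ) : 0 ≤ D x n ℓ := by
  refine le_trans ?_ (D_lower x n ℓ)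
  have := B_nonneg x n ℓ
  have := Real.log_nonneg (x := 2) (by norm_num)
  positivity

/-! ### asymptotics -/

theorem nml_close (a b : ℕ → ℝ) (ha : ∀ᶠ n in atTop, a n ∈ Set.Icc (0 : ℝ) 1)
    (hb : ∀ᶠ n in atTop, b n ∈ Set.Icc (0 : ℝ) 1) (h : Tendsto (fun n => a n - b n) atTop (𝓝 0)) :
    Tendsto (fun n => Real.negMulLog (a n) - Real.negMulLog (b n)) atTop (𝓝 0) := by
  have hu : UniformContinuousOn Real.negMulLog (Set.Icc (0 : ℝ) 1) :=
    isCompact_Icc.uniformContinuousOn_of_continuous Real.continuous_negMulLog.continuousOn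
  rw [Metric.uniformContinuousOn_iff] at hu
  rw [Metric.tendsto_atTop'] at *
  intro ε hε
  obtain ⟨δ, hδ, hu⟩ := hu ε hε
  have h1 : ∀ᶠ n in atTop, dist (a n - b n) 0 < δ := by
    obtain ⟨N, hN⟩ := h δ hδ
    filter_upwards [eventually_gt_atTop N] with n hn using hN n hn
  have h2 : ∀ᶠ n in atTop, dist (Real.negMulLog (a n) - Real.negMulLog (b n)) 0 < ε := by
    filter_upwards [ha, hb, h1] with n ha hb h1
    have := hu _ ha _ hb (by simpa [Real.dist_eq] using h1)
    simpa [Real.dist_eq] using this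
  obtain ⟨N, hN⟩ := h2.exists_forall_of_atTop
  exact ⟨N, fun n hn => hN n hn.le⟩

theorem ratio_close (a b : ℕ → ℝ) (K c : ℝ) (ha0 : ∀ n, 0 ≤ a n) (ha : ∀ n, a n ≤ n)
    (hab : ∀ n, |a n - b n| ≤ K) :
    Tendsto (fun n : ℕ => b n / ((n : ℝ) + c) - a n / n) atTop (𝓝 0) := by
  have ht : Tendsto (fun n : ℕ => (n : ℝ) + c) atTop atTop :=
    tendsto_atTop_add_const_right _ _ tendsto_natCast_atTop_atTop
  have hz : Tendsto (fun n : ℕ => (K + |c|) / ((n : ℝ) + c)) atTop (𝓝 0) :=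
    ht.const_div_atTop _
  refine squeeze_zero_norm' ?_ hz
  filter_upwards [ht.eventually_gt_atTop 0, eventually_gt_atTop 0] with n h1 h2
  have hn : (0 : ℝ) < n := by exact_mod_cast h2
  have e : b n / ((n : ℝ) + c) - a n / n = ((b n - a n) - a n / n * c) / ((n : ℝ) + c) := by
    field_simp; ring
  rw [e, norm_div, Real.norm_eq_abs, Real.norm_eq_abs, abs_of_pos h1]
  gcongr
  refine (abs_sub _ _).trans ?_
  have : |a n / n * c| ≤ |c| := by
    rw [abs_mul, abs_of_nonneg (div_nonneg (ha0 n) hn.le)]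
    exact mul_le_of_le_one_left (abs_nonneg _) (div_le_one_of_le₀ (ha n) hn.le)
  have := hab n
  rw [abs_sub_comm] at this
  linarith

theorem beta_close (x : ℕ → Bool) (ℓ : ℕ) :
    Tendsto (fun n => betaWord ℓ x n - B x n ℓ) atTop (𝓝 0) := by
  have h := ratio_close (fun n => M x ℓ n) (fun n => M x ℓ (n - ℓ)) ℓ (-ℓ)
    (fun n => ?_) (fun n => ?_) (M_close x ℓ)
  · refine h.congr fun n => ?_
    rw [B]
    congr 1
    change _ = (1 / ((n : ℝ) - ℓ)) * M x ℓ (n - ℓ)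
    ring
  · exact Finset.le_inf' _ _ fun f _ => by positivity
  · refine (Finset.inf'_le _ (Finset.mem_univ (fun _ => true))).trans ?_
    norm_cast
    exact (Finset.card_filter_le _ _).trans (by simp)

theorem occ_eq (x : ℕ → Bool) (n ℓ : ℕ) (u : Fin ℓ → Bool) :
    occ x n (List.ofFn u) = cnt x (n + 1 - ℓ) ℓ u := by
  unfold occ cnt
  rw [List.length_ofFn]
  congr 1
  ext i
  simp only [Finset.mem_filter]
  refine and_congr_right fun _ => ?_
  exact List.ofFn_injective.eq_iff

theorem cnt_mono (x : ℕ → Bool) (ℓ : ℕ) (u : Fin ℓ → Bool) {m n : ℕ} (h : m ≤ n) :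
    cnt x m ℓ u ≤ cnt x n ℓ u ∧ cnt x n ℓ u ≤ cnt x m ℓ u + (n - m) := by
  unfold cnt
  constructor
  · exact Finset.card_le_card (Finset.filter_subset_filter _ (Finset.range_mono h))
  · have : Finset.range n ⊆ Finset.range m ∪ Finset.Ico m n := by
      intro i; simp; omega
    refine (Finset.card_le_card (Finset.filter_subset_filter _ this)).trans ?_
    rw [Finset.filter_union]
    refine (Finset.card_union_le _ _).trans ?_
    gcongr
    exact (Finset.card_filter_le _ _).trans (by simp)

theorem occ_close (x : ℕ → Bool) (n ℓ : ℕ) (u : Fin ℓ → Bool) :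
    |(cnt x n ℓ u : ℝ) - occ x n (List.ofFn u)| ≤ ℓ + 1 := by
  rw [occ_eq]
  have h : cnt x n ℓ u ≤ cnt x (n + 1 - ℓ) ℓ u + (ℓ + 1) ∧
      cnt x (n + 1 - ℓ) ℓ u ≤ cnt x n ℓ u + (ℓ + 1) := by
    rcases le_total n (n + 1 - ℓ) with h | h
    · have := cnt_mono x ℓ u h; omega
    · have := cnt_mono x ℓ u h; omega
  obtain ⟨h1, h2⟩ := h
  have h1 : (cnt x n ℓ u : ℝ) ≤ cnt x (n + 1 - ℓ) ℓ u + (ℓ + 1) := by exact_mod_cast h1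
  have h2 : (cnt x (n + 1 - ℓ) ℓ u : ℝ) ≤ cnt x n ℓ u + (ℓ + 1) := by exact_mod_cast h2
  rw [abs_le]; constructor <;> linarith

theorem freq_mem (x : ℕ → Bool) (n ℓ : ℕ) (u : Fin ℓ → Bool) :
    (cnt x n ℓ u : ℝ) / n ∈ Set.Icc (0 : ℝ) 1 :=
  ⟨by positivity, div_le_one_of_le₀ (by exact_mod_cast cnt_le x n ℓ u) (by positivity)⟩

theorem hBlock_close (x : ℕ → Bool) (ℓ : ℕ) :
    Tendsto (fun n => hBlock ℓ x n - E x n ℓ / (ℓ * Real.log 2)) atTop (𝓝 0) := by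
  have h : Tendsto (fun n => (∑ u : Fin ℓ → Bool,
      (Real.negMulLog ((occ x n (List.ofFn u) : ℝ) / ((n : ℝ) + (1 - ℓ)))
        - Real.negMulLog ((cnt x n ℓ u : ℝ) / n))) / (ℓ * Real.log 2)) atTop (𝓝 0) := by
    have e0 : (0 : ℝ) = (∑ _u : Fin ℓ → Bool, (0 : ℝ)) / (ℓ * Real.log 2) := by simp
    rw [e0]
    refine Tendsto.div_const (tendsto_finsetSum _ fun u _ => ?_) _
    refine nml_close _ _ ?_ (Eventually.of_forall fun n => freq_mem x n ℓ u) ?_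
    · filter_upwards [eventually_ge_atTop ℓ] with n hn
      have e : (n : ℝ) + (1 - ℓ) = ((n + 1 - ℓ : ℕ) : ℝ) := by
        rw [Nat.cast_sub (by omega)]; push_cast; ring
      rw [occ_eq, e]
      exact freq_mem ..
    · exact ratio_close (fun n => (cnt x n ℓ u : ℝ)) _ (ℓ + 1) _ (fun n => by positivity)
        (fun n => by exact_mod_cast cnt_le x n ℓ u) (fun n => occ_close x n ℓ u)
  refine h.congr fun n => ?_
  rw [Finset.sum_sub_distrib, sub_div, hBlock, E]
  congr 1
  rw [Finset.sum_div, Finset.mul_sum]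
  refine Finset.sum_congr rfl fun u _ => ?_
  have e : (n : ℝ) + (1 - ℓ) = (n : ℝ) - ℓ + 1 := by ring
  rw [e, Real.negMulLog, Real.logb]
  rw [div_eq_mul_inv, mul_inv]
  ring

theorem E_succ (x : ℕ → Bool) (n ℓ : ℕ) :
    E x n (ℓ + 1) = D x n ℓ + ∑ v, Real.negMulLog ((cnt1 x n ℓ v : ℝ) / n) := by
  unfold D E
  rw [← Finset.sum_add_distrib, ← (Fin.consEquiv (fun _ : Fin (ℓ + 1) => Bool)).sum_comp,
    Fintype.sum_prod_type, Fintype.sum_bool, ← Finset.sum_add_distrib]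
  refine Finset.sum_congr rfl fun v _ => ?_
  rw [fr_add]
  simp only [fr]
  have e : ∀ a : Bool, (Fin.consEquiv fun _ : Fin (ℓ + 1) => Bool) (a, v) = Fin.cons a v :=
    fun _ => rfl
  rw [e, e]
  ring

theorem E_close (x : ℕ → Bool) (ℓ : ℕ) :
    Tendsto (fun n => E x n ℓ - ∑ k ∈ Finset.range ℓ, D x n k) atTop (𝓝 0) := by
  induction ℓ with
  | zero =>
    refine tendsto_const_nhds.congr' ?_
    filter_upwards [eventually_gt_atTop 0] with n hn
    have : ∀ u, cnt x n 0 u = n := fun u => by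
      unfold cnt
      rw [Finset.filter_true_of_mem fun i _ => Subsingleton.elim _ _]; simp
    have h : (n : ℝ) ≠ 0 := by positivity
    simp [E, this, h]
  | succ ℓ ih =>
    have h : Tendsto (fun n => ∑ v : Fin ℓ → Bool, (Real.negMulLog ((cnt1 x n ℓ v : ℝ) / n)
        - Real.negMulLog ((cnt x n ℓ v : ℝ) / n))) atTop (𝓝 0) := by
      have e0 : (0 : ℝ) = ∑ _u : Fin ℓ → Bool, (0 : ℝ) := by simp
      rw [e0]
      refine tendsto_finsetSum _ fun v _ => ?_
      refine nml_close _ _ (Eventually.of_forall fun n => ⟨by positivity, ?_⟩)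
        (Eventually.of_forall fun n => freq_mem x n ℓ v) ?_
      · refine div_le_one_of_le₀ ?_ (by positivity)
        unfold cnt1
        exact_mod_cast (Finset.card_filter_le _ _).trans (by simp)
      · have := ratio_close (fun n => (cnt x n ℓ v : ℝ)) (fun n => (cnt1 x n ℓ v : ℝ)) 1 0
          (fun n => by positivity)
          (fun n => by exact_mod_cast cnt_le x n ℓ v) (fun n => cnt1_cnt x n ℓ v)
        simpa using this
    have := h.add ih
    rw [add_zero] at this
    refine this.congr fun n => ?_
    rw [E_succ, Finset.sum_range_succ, Finset.sum_sub_distrib, E]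
    ring

theorem h_close (x : ℕ → Bool) (ℓ : ℕ) :
    Tendsto (fun n => hBlock ℓ x n - G x n ℓ) atTop (𝓝 0) := by
  have := (hBlock_close x ℓ).add ((E_close x ℓ).div_const (ℓ * Real.log 2))
  rw [zero_div, add_zero] at this
  refine this.congr fun n => ?_
  rw [G]; ring

theorem liminf_le_of_close (u v : ℕ → ℝ) (C : ℝ)
    (hv : ∀ᶠ n in atTop, 0 ≤ v n ∧ v n ≤ C) (h : Tendsto (fun n => u n - v n) atTop (𝓝 0)) :
    atTop.liminf u = atTop.liminf v := by
  have hu : ∀ᶠ n in atTop, -1 ≤ u n ∧ u n ≤ C + 1 := by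
    filter_upwards [hv, h.eventually (Ioo_mem_nhds (show (-1 : ℝ) < 0 by norm_num) one_pos)]
      with n h1 h2
    have h3 := h2.1
    have h4 := h2.2
    constructor <;> linarith [h1.1, h1.2]
  have bu : IsBoundedUnder (· ≥ ·) atTop u := ⟨-1, by simpa using hu.mono fun n h => h.1⟩
  have bv : IsBoundedUnder (· ≥ ·) atTop v := ⟨0, by simpa using hv.mono fun n h => h.1⟩
  have cu : IsCoboundedUnder (· ≥ ·) atTop u :=
    IsBoundedUnder.isCoboundedUnder_ge ⟨C + 1, by simpa using hu.mono fun n h => h.2⟩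
  have cv : IsCoboundedUnder (· ≥ ·) atTop v :=
    IsBoundedUnder.isCoboundedUnder_ge ⟨C, by simpa using hv.mono fun n h => h.2⟩
  apply le_antisymm
  · refine le_of_forall_pos_le_add fun ε hε => ?_
    rw [← sub_le_iff_le_add]
    refine le_liminf_of_le cv ?_
    have h1 := eventually_lt_of_lt_liminf (show atTop.liminf u - ε / 2 < atTop.liminf u by linarith) bu
    filter_upwards [h1, h.eventually (Iio_mem_nhds (show (0 : ℝ) < ε / 2 by linarith))] with n h1 h2
    have h3 : u n - v n < ε / 2 := h2
    linarith
  · refine le_of_forall_pos_le_add fun ε hε => ?_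
    rw [← sub_le_iff_le_add]
    refine le_liminf_of_le cu ?_
    have h1 := eventually_lt_of_lt_liminf (show atTop.liminf v - ε / 2 < atTop.liminf v by linarith) bv
    filter_upwards [h1, h.eventually (Ioi_mem_nhds (show -(ε / 2) < (0 : ℝ) by linarith))] with n h1 h2
    have h3 : -(ε / 2) < u n - v n := h2
    linarith

/-- lower limit of `B` -/
noncomputable def b (x : ℕ → Bool) (ℓ : ℕ) : ℝ := atTop.liminf fun n => B x n ℓ

/-- lower limit of `G` -/
noncomputable def g (x : ℕ → Bool) (ℓ : ℕ) : ℝ := atTop.liminf fun n => G x n ℓ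

theorem G_nonneg (x : ℕ → Bool) (n ℓ : ℕ) : 0 ≤ G x n ℓ :=
  div_nonneg (Finset.sum_nonneg fun k _ => D_nonneg x n k)
    (mul_nonneg (by positivity) (Real.log_nonneg (by norm_num)))

theorem G_le (x : ℕ → Bool) (n ℓ : ℕ) (hn : 0 < n) : G x n ℓ ≤ 1 := by
  refine div_le_one_of_le₀ ?_ (mul_nonneg (by positivity) (Real.log_nonneg (by norm_num)))
  refine (Finset.sum_le_card_nsmul _ _ _ fun k _ => D_le_log x n k hn).trans ?_
  simp

theorem betaLow_eq (x : ℕ → Bool) : betaLow x = atTop.liminf (b x) := by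
  unfold betaLow
  congr 1
  funext ℓ
  exact liminf_le_of_close _ _ (1 / 2)
    (Eventually.of_forall fun n => ⟨B_nonneg .., B_le ..⟩) (beta_close x ℓ)

theorem hLow_eq (x : ℕ → Bool) : hLow x = atTop.liminf (g x) := by
  unfold hLow
  congr 1
  funext ℓ
  refine liminf_le_of_close _ _ 1 ?_ (h_close x ℓ)
  filter_upwards [eventually_gt_atTop 0] with n hn using ⟨G_nonneg .., G_le _ _ _ hn⟩

theorem B_bdd (x : ℕ → Bool) (ℓ : ℕ) : IsBoundedUnder (· ≥ ·) atTop fun n => B x n ℓ :=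
  ⟨0, eventually_map.2 (Eventually.of_forall fun n => B_nonneg x n ℓ)⟩

theorem B_cobdd (x : ℕ → Bool) (ℓ : ℕ) : IsCoboundedUnder (· ≥ ·) atTop fun n => B x n ℓ :=
  IsBoundedUnder.isCoboundedUnder_ge
    ⟨1 / 2, eventually_map.2 (Eventually.of_forall fun n => B_le x n ℓ)⟩

theorem G_bdd (x : ℕ → Bool) (ℓ : ℕ) : IsBoundedUnder (· ≥ ·) atTop fun n => G x n ℓ :=
  ⟨0, eventually_map.2 (Eventually.of_forall fun n => G_nonneg x n ℓ)⟩

theorem G_cobdd (x : ℕ → Bool) (ℓ : ℕ) : IsCoboundedUnder (· ≥ ·) atTop fun n => G x n ℓ := by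
  refine IsBoundedUnder.isCoboundedUnder_ge ⟨1, ?_⟩
  rw [eventually_map]
  filter_upwards [eventually_gt_atTop 0] with n hn using G_le x n ℓ hn

theorem b_nonneg (x : ℕ → Bool) (ℓ : ℕ) : 0 ≤ b x ℓ :=
  le_liminf_of_le (B_cobdd x ℓ) (Eventually.of_forall fun n => B_nonneg x n ℓ)

theorem b_le (x : ℕ → Bool) (ℓ : ℕ) : b x ℓ ≤ 1 / 2 :=
  liminf_le_of_frequently_le (Eventually.of_forall fun n => B_le x n ℓ).frequently (B_bdd x ℓ)

theorem b_anti (x : ℕ → Bool) : Antitone (b x) := fun m ℓ h =>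
  liminf_le_liminf (Eventually.of_forall fun n => B_anti x n h) (B_bdd x ℓ) (B_cobdd x m)

theorem g_nonneg (x : ℕ → Bool) (ℓ : ℕ) : 0 ≤ g x ℓ :=
  le_liminf_of_le (G_cobdd x ℓ) (Eventually.of_forall fun n => G_nonneg x n ℓ)

theorem g_le (x : ℕ → Bool) (ℓ : ℕ) : g x ℓ ≤ 1 := by
  refine liminf_le_of_frequently_le (Eventually.frequently ?_) (G_bdd x ℓ)
  filter_upwards [eventually_gt_atTop 0] with n hn using G_le x n ℓ hn

theorem b_bdd (x : ℕ → Bool) : IsBoundedUnder (· ≥ ·) atTop (b x) :=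
  ⟨0, eventually_map.2 (Eventually.of_forall fun n => b_nonneg x n)⟩

theorem b_tendsto (x : ℕ → Bool) : Tendsto (b x) atTop (𝓝 (⨅ ℓ, b x ℓ)) :=
  tendsto_atTop_ciInf (b_anti x) ⟨0, by rintro _ ⟨n, rfl⟩; exact b_nonneg x n⟩

theorem betaLow_eq' (x : ℕ → Bool) : betaLow x = ⨅ ℓ, b x ℓ := by
  rw [betaLow_eq]; exact (b_tendsto x).liminf_eq

theorem betaLow_le_b (x : ℕ → Bool) (ℓ : ℕ) : betaLow x ≤ b x ℓ := by
  rw [betaLow_eq']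
  exact ciInf_le ⟨0, by rintro _ ⟨n, rfl⟩; exact b_nonneg x n⟩ ℓ

theorem g_lower (x : ℕ → Bool) (ℓ : ℕ) (hℓ : 0 < ℓ) : 2 * b x ℓ ≤ g x ℓ := by
  refine le_of_forall_pos_le_add fun ε hε => ?_
  rw [← sub_le_iff_le_add]
  refine le_liminf_of_le (G_cobdd x ℓ) ?_
  have h1 := eventually_lt_of_lt_liminf
    (show b x ℓ - ε / 2 < atTop.liminf fun n => B x n ℓ by unfold b; linarith) (B_bdd x ℓ)
  filter_upwards [h1] with n h1
  have h2 : 2 * B x n ℓ ≤ G x n ℓ := by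
    unfold G
    have hl := Real.log_pos (show (1 : ℝ) < 2 by norm_num)
    rw [le_div_iff₀ (by positivity)]
    have := Finset.card_nsmul_le_sum (Finset.range ℓ) (fun k => D x n k)
      (2 * Real.log 2 * B x n ℓ) (fun k hk => le_trans (by
        have := B_anti x n (Finset.mem_range.1 hk).le
        gcongr) (D_lower x n k))
    simp only [Finset.card_range, nsmul_eq_mul] at this
    linarith
  linarith

/-- monotone version of binary entropy -/
noncomputable def phi (t : ℝ) : ℝ := Real.binEntropy (min t (1 / 2)) / Real.log 2

theorem phi_mono {s t : ℝ} (hs : 0 ≤ s) (h : s ≤ t) : phi s ≤ phi t := by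
  unfold phi
  refine div_le_div_of_nonneg_right ?_ (Real.log_nonneg (by norm_num))
  refine Real.binEntropy_strictMonoOn.monotoneOn ?_ ?_ (min_le_min_right _ h)
  · exact ⟨le_min hs (by norm_num), by simp⟩
  · exact ⟨le_min (hs.trans h) (by norm_num), by simp⟩

theorem phi_cont : Continuous phi := by
  unfold phi
  exact (Real.binEntropy_continuous.comp (by fun_prop)).div_const _

theorem G_upper (x : ℕ → Bool) (n m ℓ : ℕ) (hn : 0 < n) (hml : m ≤ ℓ) (hℓ : 0 < ℓ) :
    G x n ℓ ≤ m / ℓ + phi (B x n m) := by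
  have hl := Real.log_pos (show (1 : ℝ) < 2 by norm_num)
  have hp : 0 ≤ Real.binEntropy (B x n m) :=
    Real.binEntropy_nonneg (B_nonneg ..) ((B_le ..).trans (by norm_num))
  have e : phi (B x n m) = Real.binEntropy (B x n m) / Real.log 2 := by
    rw [phi, min_eq_left (B_le ..)]
  have h1 : ∀ k ∈ Finset.range ℓ, D x n k ≤
      (if k < m then Real.log 2 else 0) + Real.binEntropy (B x n m) := by
    intro k _
    split_ifs with h
    · have := D_le_log x n k hn; linarith
    · rw [zero_add]
      refine (D_upper x n k hn).trans ?_
      refine Real.binEntropy_strictMonoOn.monotoneOn ⟨B_nonneg .., ?_⟩ ⟨B_nonneg .., ?_⟩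
        (B_anti x n (by omega))
      · simpa using B_le x n k
      · simpa using B_le x n m
  have h2 := Finset.sum_le_sum h1
  rw [Finset.sum_add_distrib, ← Finset.sum_filter] at h2
  have h3 : (Finset.range ℓ).filter (fun k => k < m) = Finset.range m := by
    ext k; simp; omega
  rw [h3] at h2
  simp only [Finset.sum_const, Finset.card_range, nsmul_eq_mul] at h2
  rw [G, e, div_le_iff₀ (by positivity)]
  refine h2.trans (le_of_eq ?_)
  field_simp

theorem main_upper (x : ℕ → Bool) (c : ℝ) (hc : betaLow x < c) : hLow x ≤ phi c := by
  obtain ⟨m, hm⟩ : ∃ m, b x m < c := by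
    rw [betaLow_eq'] at hc
    exact exists_lt_of_ciInf_lt hc
  have h1 : ∀ ℓ, m ≤ ℓ → 0 < ℓ → g x ℓ ≤ m / ℓ + phi c := by
    intro ℓ h h0
    refine liminf_le_of_frequently_le ?_ (G_bdd x ℓ)
    have hf := frequently_lt_of_liminf_lt (B_cobdd x m) hm
    refine (hf.and_eventually (eventually_gt_atTop 0)).mono ?_
    rintro n ⟨h1, h2⟩
    have := G_upper x n m ℓ h2 h h0
    have := phi_mono (B_nonneg x n m) h1.le
    linarith
  rw [hLow_eq]
  refine le_of_forall_pos_le_add fun ε hε => ?_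
  refine liminf_le_of_frequently_le (Eventually.frequently ?_)
    ⟨0, eventually_map.2 (Eventually.of_forall fun n => g_nonneg x n)⟩
  have ht : Tendsto (fun ℓ : ℕ => (m : ℝ) / ℓ) atTop (𝓝 0) :=
    tendsto_natCast_atTop_atTop.const_div_atTop _
  filter_upwards [eventually_ge_atTop m, eventually_gt_atTop 0,
    ht.eventually (Iio_mem_nhds hε)] with ℓ h2 h3 h4
  have := h1 ℓ h2 h3
  have h5 : (m : ℝ) / ℓ < ε := h4
  linarith

end Rauzy

theorem rauzy_lower_beta_liminf (x : ℕ → Bool) :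
    2 * betaLow x ≤ hLow x ∧ hLow x ≤ binEntropy (betaLow x) := by
  constructor
  · rw [Rauzy.hLow_eq]
    refine le_liminf_of_le (IsBoundedUnder.isCoboundedUnder_ge
      ⟨1, eventually_map.2 (Eventually.of_forall fun n => Rauzy.g_le x n)⟩) ?_
    filter_upwards [eventually_gt_atTop 0] with ℓ h
    have := Rauzy.g_lower x ℓ h
    have := Rauzy.betaLow_le_b x ℓ
    linarith
  · have h1 : hLow x ≤ Rauzy.phi (betaLow x) := by
      refine ge_of_tendsto (Rauzy.phi_cont.continuousWithinAt
        (s := Set.Ioi (betaLow x)) (x := betaLow x)) ?_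
      filter_upwards [self_mem_nhdsWithin] with c hc using Rauzy.main_upper x c hc
    refine h1.trans (le_of_eq ?_)
    have h2 : betaLow x ≤ 1 / 2 := (Rauzy.betaLow_le_b x 0).trans (Rauzy.b_le x 0)
    rw [Rauzy.phi, min_eq_left h2, Real.binEntropy_eq_negMulLog_add_negMulLog_one_sub, binEntropy]
    simp only [Real.negMulLog, Real.logb]
    ring
end

section
/- For every infinite binary sequence x ∈ B^ℕ, 2·β̄(x) ≤ h̄(x) ≤ H(β̄(x)). -/
open Filter Topology

namespace Rz

def blk (x : ℕ → Bool) (ℓ i : ℕ) : Fin ℓ → Bool := fun j => x (i + j)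

/-- frequency of `u` at positions `0..N-1` -/
noncomputable def pp (x : ℕ → Bool) (ℓ N : ℕ) (u : Fin ℓ → Bool) : ℝ :=
  (((Finset.range N).filter (fun i => blk x ℓ i = u)).card : ℝ) / N

/-- frequency of `u` at positions `1..N` -/
noncomputable def qq (x : ℕ → Bool) (ℓ N : ℕ) (u : Fin ℓ → Bool) : ℝ :=
  (((Finset.range N).filter (fun i => blk x ℓ (i + 1) = u)).card : ℝ) / N

noncomputable def JJ (x : ℕ → Bool) (ℓ N : ℕ) (a : Bool) (v : Fin ℓ → Bool) : ℝ :=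
  (((Finset.range N).filter (fun i => x i = a ∧ blk x ℓ (i + 1) = v)).card : ℝ) / N

noncomputable def EE (x : ℕ → Bool) (ℓ N : ℕ) : ℝ :=
  ∑ u : Fin ℓ → Bool, Real.negMulLog (pp x ℓ N u)

noncomputable def SS (x : ℕ → Bool) (ℓ N : ℕ) : ℝ :=
  ∑ u : Fin ℓ → Bool, Real.negMulLog (qq x ℓ N u)

noncomputable def CC (x : ℕ → Bool) (ℓ N : ℕ) : ℝ :=
  ∑ v : Fin ℓ → Bool, (Real.negMulLog (JJ x ℓ N true v) + Real.negMulLog (JJ x ℓ N false v)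
    - Real.negMulLog (JJ x ℓ N true v + JJ x ℓ N false v))

noncomputable def bb (x : ℕ → Bool) (ℓ N : ℕ) : ℝ :=
  (1 / (N : ℝ)) *
    ((Finset.univ : Finset ((Fin ℓ → Bool) → Bool)).inf' Finset.univ_nonempty
      (fun f => ((((Finset.range N).filter
        (fun i => x i ≠ f (blk x ℓ (i + 1)))).card : ℝ))))

lemma JJ_nonneg (x : ℕ → Bool) (ℓ N : ℕ) (a : Bool) (v : Fin ℓ → Bool) : 0 ≤ JJ x ℓ N a v := by
  unfold JJ; positivity

lemma JJ_add (x : ℕ → Bool) (ℓ N : ℕ) (v : Fin ℓ → Bool) :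
    JJ x ℓ N true v + JJ x ℓ N false v = qq x ℓ N v := by
  unfold JJ qq
  rw [← add_div]
  congr 1
  rw [← Finset.card_filter_add_card_filter_not (s := (Finset.range N).filter
    (fun i => blk x ℓ (i + 1) = v)) (fun i => x i = true)]
  push_cast
  rw [Finset.filter_filter, Finset.filter_filter]
  congr 3 <;> · ext i; simp [and_comm]

lemma qq_sum (x : ℕ → Bool) (ℓ N : ℕ) (hN : 0 < N) : ∑ v, qq x ℓ N v = 1 := by
  unfold qq
  rw [← Finset.sum_div, ← Nat.cast_sum,
    ← Finset.card_eq_sum_card_fiberwise (fun _ _ => Finset.mem_coe.2 (Finset.mem_univ _))]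
  have : (N : ℝ) ≠ 0 := by positivity
  simp [this]

lemma pp_mem (x : ℕ → Bool) (ℓ N : ℕ) (u : Fin ℓ → Bool) : pp x ℓ N u ∈ Set.Icc (0 : ℝ) 1 := by
  unfold pp
  refine ⟨by positivity, div_le_one_of_le₀ ?_ (by positivity)⟩
  exact_mod_cast (Finset.card_filter_le _ _).trans (by simp)

lemma qq_mem (x : ℕ → Bool) (ℓ N : ℕ) (u : Fin ℓ → Bool) : qq x ℓ N u ∈ Set.Icc (0 : ℝ) 1 := by
  unfold qq
  refine ⟨by positivity, div_le_one_of_le₀ ?_ (by positivity)⟩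
  exact_mod_cast (Finset.card_filter_le _ _).trans (by simp)

lemma EE_succ (x : ℕ → Bool) (ℓ N : ℕ) : EE x (ℓ + 1) N = SS x ℓ N + CC x ℓ N := by
  have h : ∀ a v, pp x (ℓ + 1) N (Fin.cons a v : Fin (ℓ + 1) → Bool) = JJ x ℓ N a v := by
    intro a v
    unfold pp JJ
    congr 3
    ext i
    simp only [Finset.mem_filter, Finset.mem_range, and_congr_right_iff]
    intro _
    constructor
    · intro h
      refine ⟨by simpa [blk] using congrFun h 0, ?_⟩
      funext j
      have := congrFun h j.succ
      simp only [blk, Fin.cons_succ, Fin.val_succ] at this ⊢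
      rw [← this]; congr 1; omega
    · rintro ⟨h1, h2⟩
      funext j
      refine Fin.cases ?_ (fun j => ?_) j
      · simpa [blk] using h1
      · rw [Fin.cons_succ, ← h2]
        simp only [blk, Fin.val_succ]
        congr 1; omega
  have h2 : EE x (ℓ + 1) N = ∑ v, ∑ a, Real.negMulLog (JJ x ℓ N a v) := by
    unfold EE
    rw [← (Fin.consEquiv (fun _ : Fin (ℓ + 1) => Bool)).sum_comp, Fintype.sum_prod_type_right]
    simp only [Fin.consEquiv, Equiv.coe_fn_mk, h]
  rw [h2]
  unfold SS CC
  rw [← Finset.sum_add_distrib]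
  refine Finset.sum_congr rfl fun v _ => ?_
  rw [JJ_add]; simp

lemma bb_eq (x : ℕ → Bool) (ℓ N : ℕ) :
    bb x ℓ N = ∑ v, min (JJ x ℓ N true v) (JJ x ℓ N false v) := by
  have key : ∀ f : (Fin ℓ → Bool) → Bool,
      (1 / (N : ℝ)) * ((((Finset.range N).filter
        (fun i => x i ≠ f (blk x ℓ (i + 1)))).card : ℝ)) = ∑ v, JJ x ℓ N (!f v) v := by
    intro f
    rw [Finset.card_eq_sum_card_fiberwise (f := fun i => blk x ℓ (i + 1)) (t := Finset.univ)
      (fun _ _ => Finset.mem_coe.2 (Finset.mem_univ _))]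
    rw [Nat.cast_sum, Finset.mul_sum]
    refine Finset.sum_congr rfl fun v _ => ?_
    unfold JJ
    rw [one_div_mul_eq_div, Finset.filter_filter]
    congr 3
    ext i
    simp only [Finset.mem_filter]
    constructor
    · rintro ⟨h0, h1, h2⟩
      subst h2
      refine ⟨h0, ?_, rfl⟩
      revert h1; cases x i <;> cases f _ <;> simp
    · rintro ⟨h0, h1, h2⟩
      subst h2
      refine ⟨h0, ?_, rfl⟩
      rw [h1]; simp
  apply le_antisymm
  · let f : (Fin ℓ → Bool) → Bool := fun v => decide (JJ x ℓ N false v ≤ JJ x ℓ N true v)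
    have : bb x ℓ N ≤ ∑ v, JJ x ℓ N (!f v) v := by
      rw [← key f]
      unfold bb
      gcongr
      exact Finset.inf'_le _ (Finset.mem_univ f)
    refine this.trans (Finset.sum_le_sum fun v _ => ?_)
    by_cases h : JJ x ℓ N false v ≤ JJ x ℓ N true v
    · simp [f, h]
    · simp [f, h, le_of_not_ge h]
  · unfold bb
    obtain ⟨f, -, hf⟩ := Finset.exists_mem_eq_inf' (Finset.univ_nonempty (α := (Fin ℓ → Bool) → Bool))
      (fun f => ((((Finset.range N).filter
        (fun i => x i ≠ f (blk x ℓ (i + 1)))).card : ℝ)))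
    rw [hf, key f]
    refine Finset.sum_le_sum fun v _ => ?_
    cases f v <;> simp

lemma bb_nonneg (x : ℕ → Bool) (ℓ N : ℕ) : 0 ≤ bb x ℓ N := by
  rw [bb_eq]
  exact Finset.sum_nonneg fun v _ => le_min (JJ_nonneg ..) (JJ_nonneg ..)

lemma bb_le (x : ℕ → Bool) (ℓ N : ℕ) : bb x ℓ N ≤ 2⁻¹ := by
  rcases Nat.eq_zero_or_pos N with rfl | hN
  · simp [bb]
  rw [bb_eq]
  calc _ ≤ ∑ v, 2⁻¹ * qq x ℓ N v := by
        refine Finset.sum_le_sum fun v _ => ?_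
        rw [← JJ_add]
        rcases min_cases (JJ x ℓ N true v) (JJ x ℓ N false v) with h | h <;> linarith
    _ = _ := by rw [← Finset.mul_sum, qq_sum _ _ _ hN, mul_one]

lemma bb_succ (x : ℕ → Bool) (ℓ N : ℕ) : bb x (ℓ + 1) N ≤ bb x ℓ N := by
  unfold bb
  gcongr
  refine Finset.le_inf' _ _ fun f _ => ?_
  exact Finset.inf'_le _ (Finset.mem_univ (fun u : Fin (ℓ + 1) → Bool => f (fun j => u j.castSucc)))

lemma bb_anti (x : ℕ → Bool) (N : ℕ) : Antitone (fun ℓ => bb x ℓ N) :=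
  antitone_nat_of_succ_le fun ℓ => bb_succ x ℓ N

lemma pair_eq (a c : ℝ) (ha : 0 ≤ a) (hc : 0 ≤ c) :
    Real.negMulLog a + Real.negMulLog c - Real.negMulLog (a + c)
      = (a + c) * Real.binEntropy (min a c / (a + c)) := by
  rcases (add_nonneg ha hc).eq_or_lt with h | h
  · have : a = 0 := by linarith
    have : c = 0 := by linarith
    subst_vars; simp
  wlog hac : a ≤ c generalizing a c
  · have := this c a hc ha (by linarith) (le_of_not_ge hac)
    rw [min_comm, add_comm a c]; linarith
  rw [min_eq_left hac, Real.binEntropy_eq_negMulLog_add_negMulLog_one_sub]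
  have h1 : 1 - a / (a + c) = c / (a + c) := by field_simp; ring
  rw [h1]
  have ea := Real.negMulLog_mul (a + c) (a / (a + c))
  have ec := Real.negMulLog_mul (a + c) (c / (a + c))
  rw [mul_div_cancel₀ _ h.ne'] at ea ec
  rw [ea, ec]
  field_simp
  ring

lemma two_mul_le (p : ℝ) (h0 : 0 ≤ p) (h1 : p ≤ 2⁻¹) :
    2 * p * Real.log 2 ≤ Real.binEntropy p := by
  have h := Real.strictConcave_binEntropy.concaveOn.2
  have := @h 0 (by simp) 2⁻¹ (by norm_num) (1 - 2 * p) (2 * p)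
    (by linarith) (by linarith) (by ring)
  simp only [smul_eq_mul, Real.binEntropy_zero, Real.binEntropy_two_inv, mul_zero, zero_add] at this
  rwa [show 2 * p * 2⁻¹ = p by ring] at this

lemma CC_lower (x : ℕ → Bool) (ℓ N : ℕ) : 2 * bb x ℓ N * Real.log 2 ≤ CC x ℓ N := by
  rw [bb_eq, Finset.mul_sum, Finset.sum_mul]
  unfold CC
  refine Finset.sum_le_sum fun v _ => ?_
  have ha := JJ_nonneg x ℓ N true v
  have hc := JJ_nonneg x ℓ N false v
  generalize JJ x ℓ N true v = a at *
  generalize JJ x ℓ N false v = c at *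
  rw [pair_eq a c ha hc]
  rcases (add_nonneg ha hc).eq_or_lt with h | h
  · have : a = 0 := by linarith
    have : c = 0 := by linarith
    subst_vars; simp
  have h2 : min a c / (a + c) ≤ 2⁻¹ := by
    rw [div_le_iff₀ h]
    rcases min_cases a c with h | h <;> linarith
  have := mul_le_mul_of_nonneg_left (two_mul_le _ (by positivity) h2) h.le
  refine le_trans (le_of_eq ?_) this
  field_simp

lemma CC_upper (x : ℕ → Bool) (ℓ N : ℕ) (hN : 0 < N) :
    CC x ℓ N ≤ Real.binEntropy (bb x ℓ N) := by
  have := Real.strictConcave_binEntropy.concaveOn.le_map_sum (t := Finset.univ)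
    (w := fun v => qq x ℓ N v)
    (p := fun v => min (JJ x ℓ N true v) (JJ x ℓ N false v) / qq x ℓ N v)
    (fun v _ => (qq_mem x ℓ N v).1) (qq_sum x ℓ N hN) (by
      intro v _
      have ha := JJ_nonneg x ℓ N true v
      have hc := JJ_nonneg x ℓ N false v
      have hq := (qq_mem x ℓ N v).1
      refine ⟨by positivity, div_le_one_of_le₀ ?_ hq⟩
      rw [← JJ_add]
      exact (min_le_left _ _).trans (by linarith))
  refine (le_of_eq ?_).trans (this.trans (le_of_eq ?_))
  · unfold CC
    refine Finset.sum_congr rfl fun v _ => ?_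
    rw [pair_eq _ _ (JJ_nonneg ..) (JJ_nonneg ..), JJ_add]; rfl
  · rw [bb_eq]
    congr 1
    refine Finset.sum_congr rfl fun v _ => ?_
    have ha := JJ_nonneg x ℓ N true v
    have hc := JJ_nonneg x ℓ N false v
    rw [smul_eq_mul]
    by_cases h : qq x ℓ N v = 0
    · rw [h]
      rw [← JJ_add] at h
      have : JJ x ℓ N true v = 0 := by linarith
      have : JJ x ℓ N false v = 0 := by linarith
      simp [*]
    · field_simp

lemma sub_le (x : ℕ → Bool) (ℓ N : ℕ) (u : Fin ℓ → Bool) :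
    |qq x ℓ N u - pp x ℓ N u| ≤ 1 / N := by
  unfold qq pp
  rw [← sub_div, abs_div, Nat.abs_cast]
  gcongr
  simp only [Finset.card_filter, Nat.cast_sum]
  have h1 := Finset.sum_range_succ (fun i => (((if blk x ℓ i = u then 1 else 0 : ℕ)) : ℝ)) N
  have h2 := Finset.sum_range_succ' (fun i => (((if blk x ℓ i = u then 1 else 0 : ℕ)) : ℝ)) N
  rw [h1] at h2
  rw [abs_le]
  constructor <;> split_ifs at h2 <;> push_cast at * <;> linarith

lemma SS_sub (x : ℕ → Bool) (ℓ : ℕ) :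
    Tendsto (fun N => SS x ℓ N - EE x ℓ N) atTop (𝓝 0) := by
  have h : ∀ u, Tendsto (fun N => Real.negMulLog (qq x ℓ N u) - Real.negMulLog (pp x ℓ N u))
      atTop (𝓝 0) := by
    intro u
    have hu := isCompact_Icc.uniformContinuousOn_of_continuous
      (Real.continuous_negMulLog.continuousOn (s := Set.Icc (0 : ℝ) 1))
    rw [Metric.uniformContinuousOn_iff] at hu
    rw [Metric.tendsto_atTop]
    intro ε hε
    obtain ⟨δ, hδ, hd⟩ := hu ε hε
    obtain ⟨M, hM⟩ := exists_nat_one_div_lt hδ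
    refine ⟨M + 1, fun N hN => ?_⟩
    have := hd _ (qq_mem x ℓ N u) _ (pp_mem x ℓ N u) (by
      rw [Real.dist_eq]
      refine (sub_le x ℓ N u).trans_lt (lt_of_le_of_lt ?_ hM)
      gcongr
      exact_mod_cast hN)
    simpa [Real.dist_eq] using this
  have := tendsto_finsetSum (Finset.univ) (fun u _ => h u)
  simpa [SS, EE, Finset.sum_sub_distrib] using this

lemma EE_sub (x : ℕ → Bool) (ℓ : ℕ) :
    Tendsto (fun N => EE x ℓ N - ∑ k ∈ Finset.range ℓ, CC x k N) atTop (𝓝 0) := by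
  induction ℓ with
  | zero =>
    refine tendsto_const_nhds.congr' ?_
    filter_upwards [eventually_gt_atTop 0] with N hN
    have hN' : (N : ℝ) ≠ 0 := by positivity
    have : ∀ u, pp x 0 N u = 1 := by
      intro u
      have : ∀ i, blk x 0 i = u := fun i => Subsingleton.elim _ _
      simp [pp, this, hN']
    simp [EE, this]
  | succ ℓ ih =>
    have := (SS_sub x ℓ).add ih
    rw [add_zero] at this
    refine this.congr fun N => ?_
    rw [EE_succ, Finset.sum_range_succ]; ring

noncomputable def ee (x : ℕ → Bool) (ℓ N : ℕ) : ℝ := EE x ℓ N / (ℓ * Real.log 2)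

noncomputable def hl (x : ℕ → Bool) (ℓ : ℕ) : ℝ := limsup (fun N => ee x ℓ N) atTop

noncomputable def bl (x : ℕ → Bool) (ℓ : ℕ) : ℝ := limsup (fun N => bb x ℓ N) atTop

lemma hBlock_shift (x : ℕ → Bool) (ℓ n : ℕ) : hBlock ℓ x (n + ℓ) = ee x ℓ (n + 1) := by
  have h : ∀ u : Fin ℓ → Bool,
      (occ x (n + ℓ) (List.ofFn u) : ℝ) / (((n + ℓ : ℕ) : ℝ) - ℓ + 1) = pp x ℓ (n + 1) u := by
    intro u
    unfold occ pp
    rw [List.length_ofFn]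
    have h1 : n + ℓ + 1 - ℓ = n + 1 := by omega
    rw [h1]
    congr 1
    · congr 2
      ext i
      simp only [factor, List.ofFn_inj]
      rfl
    · push_cast; ring
  unfold hBlock ee EE
  simp only [h, Real.negMulLog, Real.logb]
  rw [Finset.mul_sum, Finset.sum_div]
  refine Finset.sum_congr rfl fun u _ => ?_
  rw [div_eq_mul_inv, div_eq_mul_inv, div_eq_mul_inv, mul_inv]
  ring

lemma hUp_eq (x : ℕ → Bool) : hUp x = limsup (fun ℓ => hl x ℓ) atTop := by
  unfold hUp hl
  congr 1
  funext ℓ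
  rw [← limsup_nat_add _ ℓ]
  simp only [hBlock_shift]
  exact limsup_nat_add (fun N => ee x ℓ N) 1

lemma betaUp_eq (x : ℕ → Bool) : betaUp x = limsup (fun ℓ => bl x ℓ) atTop := by
  unfold betaUp bl
  congr 1
  funext ℓ
  rw [← limsup_nat_add _ ℓ]
  congr 1
  funext n
  unfold betaWord bb
  rw [Nat.add_sub_cancel]
  push_cast
  rw [add_sub_cancel_right]
  rfl

lemma bdd {u : ℕ → ℝ} {c : ℝ} (h : ∀ᶠ n in atTop, u n ≤ c) :
    atTop.IsBoundedUnder (· ≤ ·) u := ⟨c, h⟩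

lemma cobdd_s3 {u : ℕ → ℝ} {c : ℝ} (h : ∀ n, c ≤ u n) :
    atTop.IsCoboundedUnder (· ≤ ·) u :=
  (isBoundedUnder_of ⟨c, h⟩ : atTop.IsBoundedUnder (· ≥ ·) u).isCoboundedUnder_le

lemma le_limsup_of {u : ℕ → ℝ} {a c : ℝ} (hb : ∀ᶠ n in atTop, u n ≤ c) (h : ∀ n, a ≤ u n) :
    a ≤ limsup u atTop :=
  le_limsup_of_frequently_le (Frequently.of_forall h) (bdd hb)

lemma ee_nonneg (x : ℕ → Bool) (ℓ N : ℕ) : 0 ≤ ee x ℓ N := by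
  unfold ee EE
  have := Real.log_pos one_lt_two
  refine div_nonneg (Finset.sum_nonneg fun u _ => ?_) (by positivity)
  exact Real.negMulLog_nonneg (pp_mem x ℓ N u).1 (pp_mem x ℓ N u).2

lemma ee_upper (x : ℕ → Bool) (m ℓ : ℕ) (hm : m ≤ ℓ) (hl : 0 < ℓ) (ε : ℝ) (hε : 0 < ε) :
    ∀ᶠ N in atTop, ee x ℓ N ≤ m / ℓ + Real.binEntropy (bb x m N) / Real.log 2 + ε := by
  have hlog := Real.log_pos one_lt_two
  have hl' : (1 : ℝ) ≤ ℓ := by exact_mod_cast hl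
  filter_upwards [(EE_sub x ℓ).eventually_lt_const (show 0 < ε * (ℓ * Real.log 2) by positivity),
    eventually_gt_atTop 0] with N hN hN0
  have hb0 : 0 ≤ Real.binEntropy (bb x m N) :=
    Real.binEntropy_nonneg (bb_nonneg ..) ((bb_le ..).trans (by norm_num))
  have h1 : ∑ k ∈ Finset.range m, CC x k N ≤ m * Real.log 2 := by
    calc _ ≤ ∑ k ∈ Finset.range m, Real.log 2 :=
          Finset.sum_le_sum fun k _ => (CC_upper x k N hN0).trans Real.binEntropy_le_log_two
      _ = _ := by simp
  have h2 : ∑ k ∈ Finset.Ico m ℓ, CC x k N ≤ ℓ * Real.binEntropy (bb x m N) := by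
    calc _ ≤ ∑ k ∈ Finset.Ico m ℓ, Real.binEntropy (bb x m N) := by
          refine Finset.sum_le_sum fun k hk => (CC_upper x k N hN0).trans ?_
          exact Real.binEntropy_strictMonoOn.monotoneOn ⟨bb_nonneg .., bb_le ..⟩
            ⟨bb_nonneg .., bb_le ..⟩ (bb_anti x N (Finset.mem_Ico.1 hk).1)
      _ = ((ℓ - m : ℕ) : ℝ) * Real.binEntropy (bb x m N) := by simp
      _ ≤ _ := by
          gcongr
          exact Nat.sub_le _ _
  have h3 := Finset.sum_range_add_sum_Ico (fun k => CC x k N) hm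
  unfold ee
  rw [div_le_iff₀ (by positivity)]
  have h4 : (m / ℓ + Real.binEntropy (bb x m N) / Real.log 2 + ε) * (ℓ * Real.log 2)
    = m * Real.log 2 + ℓ * Real.binEntropy (bb x m N) + ε * (ℓ * Real.log 2) := by
    field_simp
  rw [h4]
  linarith

lemma ee_le_two (x : ℕ → Bool) (ℓ : ℕ) : ∀ᶠ N in atTop, ee x ℓ N ≤ 2 := by
  rcases Nat.eq_zero_or_pos ℓ with rfl | h
  · simp [ee]
  filter_upwards [ee_upper x 0 ℓ h.le h 1 one_pos] with N hN
  have hlog := Real.log_pos one_lt_two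
  have : Real.binEntropy (bb x 0 N) / Real.log 2 ≤ 1 :=
    div_le_one_of_le₀ Real.binEntropy_le_log_two hlog.le
  simp at hN
  linarith

lemma ee_lower (x : ℕ → Bool) (ℓ : ℕ) (hl : 0 < ℓ) (ε : ℝ) (hε : 0 < ε) :
    ∀ᶠ N in atTop, 2 * bb x ℓ N ≤ ee x ℓ N + ε := by
  have hlog := Real.log_pos one_lt_two
  have hl' : (1 : ℝ) ≤ ℓ := by exact_mod_cast hl
  filter_upwards [(EE_sub x ℓ).eventually_const_lt
    (show -(ε * (ℓ * Real.log 2)) < 0 by rw [neg_lt_zero]; positivity)] with N hN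
  have h1 : ℓ * (2 * bb x ℓ N * Real.log 2) ≤ ∑ k ∈ Finset.range ℓ, CC x k N := by
    calc _ = ∑ k ∈ Finset.range ℓ, 2 * bb x ℓ N * Real.log 2 := by simp
      _ ≤ _ := by
        refine Finset.sum_le_sum fun k hk => le_trans ?_ (CC_lower x k N)
        gcongr
        exact bb_anti x N (Finset.mem_range.1 hk).le
  unfold ee
  rw [← sub_le_iff_le_add, le_div_iff₀ (by positivity)]
  linarith

lemma bl_nonneg (x : ℕ → Bool) (ℓ : ℕ) : 0 ≤ bl x ℓ :=
  le_limsup_of (Eventually.of_forall (bb_le x ℓ)) (bb_nonneg x ℓ)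

lemma bl_le (x : ℕ → Bool) (ℓ : ℕ) : bl x ℓ ≤ 2⁻¹ :=
  limsup_le_of_le (cobdd_s3 (bb_nonneg x ℓ)) (Eventually.of_forall (bb_le x ℓ))

lemma bl_anti (x : ℕ → Bool) : Antitone (bl x) := fun _ _ h =>
  limsup_le_limsup (Eventually.of_forall fun N => bb_anti x N h) (cobdd_s3 (bb_nonneg x _))
    (bdd (Eventually.of_forall (bb_le x _)))

lemma hl_nonneg (x : ℕ → Bool) (ℓ : ℕ) : 0 ≤ hl x ℓ :=
  le_limsup_of (ee_le_two x ℓ) (ee_nonneg x ℓ)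

lemma hl_le (x : ℕ → Bool) (ℓ : ℕ) : hl x ℓ ≤ 2 :=
  limsup_le_of_le (cobdd_s3 (ee_nonneg x ℓ)) (ee_le_two x ℓ)

lemma bl_tendsto (x : ℕ → Bool) : Tendsto (bl x) atTop (𝓝 (betaUp x)) := by
  have := tendsto_atTop_ciInf (bl_anti x) ⟨0, by rintro _ ⟨ℓ, rfl⟩; exact bl_nonneg x ℓ⟩
  rw [betaUp_eq]
  have h := this.limsup_eq
  change Tendsto (bl x) atTop (𝓝 (limsup (bl x) atTop))
  rwa [h]

lemma two_bl_le (x : ℕ → Bool) (ℓ : ℕ) (h0 : 0 < ℓ) : 2 * bl x ℓ ≤ hl x ℓ := by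
  refine le_of_forall_pos_le_add fun ε hε => ?_
  have h1 : ∀ᶠ N in atTop, ee x ℓ N < hl x ℓ + ε / 2 :=
    eventually_lt_of_limsup_lt (show limsup (fun N => ee x ℓ N) atTop < _ by
      change hl x ℓ < _; linarith) (bdd (ee_le_two x ℓ))
  have : bl x ℓ ≤ (hl x ℓ + ε) / 2 := by
    refine limsup_le_of_le (cobdd_s3 (bb_nonneg x ℓ)) ?_
    filter_upwards [h1, ee_lower x ℓ h0 (ε / 2) (by positivity)] with N a b
    linarith
  linarith

lemma hl_upper (x : ℕ → Bool) (m ℓ : ℕ) (hm : m ≤ ℓ) (h0 : 0 < ℓ) :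
    hl x ℓ ≤ m / ℓ + Real.binEntropy (bl x m) / Real.log 2 := by
  have hlog := Real.log_pos one_lt_two
  refine le_of_forall_pos_le_add fun ε hε => ?_
  have hc := Metric.continuous_iff.1 Real.binEntropy_continuous (bl x m) (ε / 2 * Real.log 2)
    (by positivity)
  obtain ⟨δ, hδ, hd⟩ := hc
  have h1 : ∀ᶠ N in atTop, bb x m N < bl x m + δ :=
    eventually_lt_of_limsup_lt (show limsup (fun N => bb x m N) atTop < _ by
      change bl x m < _; linarith) (bdd (Eventually.of_forall (bb_le x m)))
  refine limsup_le_of_le (cobdd_s3 (ee_nonneg x ℓ)) ?_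
  filter_upwards [h1, ee_upper x m ℓ hm h0 (ε / 2) (by positivity)] with N a b
  have key : Real.binEntropy (bb x m N) ≤ Real.binEntropy (bl x m) + ε / 2 * Real.log 2 := by
    rcases le_total (bb x m N) (bl x m) with h | h
    · have := Real.binEntropy_strictMonoOn.monotoneOn ⟨bb_nonneg x m N, bb_le ..⟩
        ⟨bl_nonneg x m, bl_le ..⟩ h
      have : 0 < ε / 2 * Real.log 2 := by positivity
      linarith
    · have := hd (bb x m N) (by rw [Real.dist_eq, abs_of_nonneg (by linarith)]; linarith)
      rw [Real.dist_eq] at this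
      linarith [(abs_lt.1 this).2]
  have key2 : Real.binEntropy (bb x m N) / Real.log 2
      ≤ Real.binEntropy (bl x m) / Real.log 2 + ε / 2 := by
    rw [div_le_iff₀ hlog, add_mul, div_mul_cancel₀ _ hlog.ne']
    exact key
  linarith

lemma binEntropy_eq (a : ℝ) : binEntropy a = Real.binEntropy a / Real.log 2 := by
  rw [Real.binEntropy_eq_negMulLog_add_negMulLog_one_sub]
  unfold binEntropy Real.negMulLog Real.logb
  ring

end Rz

theorem rauzy_upper_beta_limsup (x : ℕ → Bool) :
    2 * betaUp x ≤ hUp x ∧ hUp x ≤ binEntropy (betaUp x) := by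
  constructor
  · have h := ((Rz.bl_tendsto x).const_mul 2).limsup_eq
    rw [← h, Rz.hUp_eq]
    refine limsup_le_limsup ?_ (Rz.cobdd_s3 (c := 0) fun n => ?_)
      (Rz.bdd (Eventually.of_forall (Rz.hl_le x)))
    · filter_upwards [eventually_gt_atTop 0] with ℓ hℓ
      exact Rz.two_bl_le x ℓ hℓ
    · have := Rz.bl_nonneg x n
      positivity
  · rw [Rz.binEntropy_eq]
    have h := ((Real.binEntropy_continuous.tendsto _).comp (Rz.bl_tendsto x)).div_const (Real.log 2)
    refine ge_of_tendsto' h fun m => ?_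
    refine le_of_forall_pos_le_add fun ε hε => ?_
    rw [Rz.hUp_eq]
    refine limsup_le_of_le (Rz.cobdd_s3 (Rz.hl_nonneg x)) ?_
    filter_upwards [(tendsto_const_div_atTop_nhds_zero_nat (m : ℝ)).eventually_lt_const hε,
      eventually_ge_atTop m, eventually_gt_atTop 0] with ℓ h1 h2 h3
    have := Rz.hl_upper x m ℓ h2 h3
    simp only [Function.comp]
    linarith
end

section
/- For every infinite binary sequence x ∈ B^ℕ, h̄(x) = 0 if and only if γ̄(x) = 0. -/
open Filter Topology

namespace HG

lemma two_limsup (F : ℕ → ℕ → ℝ) (C : ℝ) (h0 : ∀ l, ∀ᶠ n in atTop, 0 ≤ F l n)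
    (hC : ∀ l, ∀ᶠ n in atTop, F l n ≤ C) :
    (atTop.limsup fun l => atTop.limsup fun n => F l n) = 0 ↔
      ∀ ε > 0, ∀ᶠ l in atTop, ∀ᶠ n in atTop, F l n < ε := by
  have bd : ∀ l, IsBoundedUnder (· ≤ ·) atTop (F l) := fun l => isBoundedUnder_of_eventually_le (hC l)
  have cbd : ∀ l, IsCoboundedUnder (· ≤ ·) atTop (F l) := fun l =>
    (isBoundedUnder_of_eventually_ge (h0 l)).isCoboundedUnder_le
  have g0 : ∀ l, 0 ≤ atTop.limsup fun n => F l n := fun l =>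
    le_limsup_of_frequently_le (h0 l).frequently (bd l)
  have gC : ∀ l, (atTop.limsup fun n => F l n) ≤ C := fun l =>
    limsup_le_of_le (cbd l) (hC l)
  have Bd : IsBoundedUnder (· ≤ ·) atTop (fun l => atTop.limsup fun n => F l n) :=
    isBoundedUnder_of_eventually_le (Eventually.of_forall gC)
  have Cbd : IsCoboundedUnder (· ≤ ·) atTop (fun l => atTop.limsup fun n => F l n) :=
    (isBoundedUnder_of_eventually_ge (Eventually.of_forall g0)).isCoboundedUnder_le
  constructor
  · intro h ε hε
    have := eventually_lt_of_limsup_lt (h.trans_lt hε) Bd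
    filter_upwards [this] with l hl
    exact eventually_lt_of_limsup_lt hl (bd l)
  · intro h
    apply le_antisymm
    · apply le_of_forall_pos_le_add
      intro ε hε
      rw [zero_add]
      apply limsup_le_of_le Cbd
      filter_upwards [h ε hε] with l hl
      exact limsup_le_of_le (cbd l) (hl.mono fun _ h => h.le)
    · exact le_limsup_of_frequently_le (Eventually.of_forall g0).frequently Bd

/-- word of length k at i -/
def wd (x : ℕ → Bool) (k i : ℕ) : Fin k → Bool := fun j => x (i + j)

def cnt (x : ℕ → Bool) (N k : ℕ) (u : Fin k → Bool) : ℕ :=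
  ((Finset.range N).filter (fun i => wd x k i = u)).card

lemma occ_eq (x : ℕ → Bool) (n k : ℕ) (u : Fin k → Bool) :
    occ x n (List.ofFn u) = cnt x (n + 1 - k) k u := by
  unfold occ cnt factor
  simp only [List.length_ofFn]
  congr 1
  apply Finset.filter_congr
  intro i _
  change List.ofFn (wd x k i) = List.ofFn u ↔ _
  exact List.ofFn_injective.eq_iff

lemma wd_succ (x : ℕ → Bool) (k i : ℕ) :
    wd x (k+1) i = Fin.snoc (α := fun _ => Bool) (wd x k i) (x (i+k)) := by
  funext j
  refine Fin.lastCases ?_ (fun j => ?_) j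
  · simp [wd]
  · simp [wd]

lemma wd_snoc_iff (x : ℕ → Bool) (k i : ℕ) (u : Fin k → Bool) (b : Bool) :
    wd x (k+1) i = Fin.snoc (α := fun _ => Bool) u b ↔ wd x k i = u ∧ x (i+k) = b := by
  rw [wd_succ]
  constructor
  · intro h
    exact Fin.snoc_inj.mp h
  · rintro ⟨rfl, rfl⟩; rfl

def c2 (x : ℕ → Bool) (N k : ℕ) (u : Fin k → Bool) (b : Bool) : ℕ :=
  cnt x N (k+1) (Fin.snoc (α := fun _ => Bool) u b)

lemma c2_eq (x : ℕ → Bool) (N k : ℕ) (u : Fin k → Bool) (b : Bool) :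
    c2 x N k u b = ((Finset.range N).filter (fun i => wd x k i = u ∧ x (i+k) = b)).card := by
  unfold c2 cnt
  simp only [wd_snoc_iff]

lemma cnt_split (x : ℕ → Bool) (N k : ℕ) (u : Fin k → Bool) :
    cnt x N k u = c2 x N k u true + c2 x N k u false := by
  rw [c2_eq, c2_eq, cnt, ← Finset.filter_filter, ← Finset.filter_filter,
    ← Finset.card_filter_add_card_filter_not (p := fun i => x (i+k) = true)]
  simp

lemma sum_cnt (x : ℕ → Bool) (N k : ℕ) : ∑ u, cnt x N k u = N := by
  unfold cnt
  rw [← Finset.card_eq_sum_card_fiberwise (fun _ _ => Finset.mem_coe.2 (Finset.mem_univ _))]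
  simp

def err (x : ℕ → Bool) (N k : ℕ) (f : (Fin k → Bool) → Bool) : ℕ :=
  ((Finset.range N).filter (fun i => x (i+k) ≠ f (wd x k i))).card

lemma err_eq (x : ℕ → Bool) (N k : ℕ) (f : (Fin k → Bool) → Bool) :
    err x N k f = ∑ u, c2 x N k u (!f u) := by
  unfold err
  rw [Finset.card_eq_sum_card_fiberwise (f := wd x k) (t := Finset.univ)
    (fun _ _ => Finset.mem_coe.2 (Finset.mem_univ _))]
  apply Finset.sum_congr rfl
  intro u _
  rw [c2_eq, Finset.filter_filter]
  congr 1
  apply Finset.filter_congr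
  intro i _
  constructor
  · rintro ⟨h, rfl⟩; refine ⟨rfl, ?_⟩
    revert h; cases x (i+k) <;> cases f (wd x k i) <;> simp
  · rintro ⟨rfl, h⟩; refine ⟨?_, rfl⟩
    rw [h]; simp

def EE (x : ℕ → Bool) (N k : ℕ) : ℕ :=
  ∑ u, min (c2 x N k u true) (c2 x N k u false)

lemma EE_le (x : ℕ → Bool) (N k : ℕ) (f) : EE x N k ≤ err x N k f := by
  rw [err_eq]
  apply Finset.sum_le_sum
  intro u _
  cases f u <;> simp

lemma EE_ex (x : ℕ → Bool) (N k : ℕ) : ∃ f, err x N k f = EE x N k := by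
  refine ⟨fun u => decide (c2 x N k u false ≤ c2 x N k u true), ?_⟩
  rw [err_eq]
  apply Finset.sum_congr rfl
  intro u _
  by_cases h : c2 x N k u false ≤ c2 x N k u true
  · simp [h]
  · simp [h]; omega

/-- log-entropy -/
noncomputable def HH (x : ℕ → Bool) (N k : ℕ) : ℝ :=
  ∑ u, Real.negMulLog ((cnt x N k u : ℝ) / N)

lemma HH_succ (x : ℕ → Bool) (N k : ℕ) : HH x N (k+1) =
    ∑ u : Fin k → Bool, (Real.negMulLog ((c2 x N k u true : ℝ) / N) +
      Real.negMulLog ((c2 x N k u false : ℝ) / N)) := by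
  unfold HH c2
  rw [← (Fin.snocEquiv (fun _ : Fin (k+1) => Bool)).sum_comp, Fintype.sum_prod_type]
  simp only [Fintype.sum_bool]
  rw [← Finset.sum_add_distrib]
  rfl

lemma HH_zero (x : ℕ → Bool) (N : ℕ) (hN : 0 < N) : HH x N 0 = 0 := by
  unfold HH
  have h := sum_cnt x N 0
  simp only [Fintype.sum_unique] at h ⊢
  rw [h, div_self (by positivity)]
  simp

lemma pair_low' (a b : ℝ) (ha : 0 ≤ a) (hab : a ≤ b) :
    Real.negMulLog (a + b) + Real.log 2 * a ≤ Real.negMulLog a + Real.negMulLog b := by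
  rcases ha.eq_or_lt with rfl | ha
  · simp
  have hb := ha.trans_le hab
  unfold Real.negMulLog
  have h1 : Real.log 2 + Real.log a ≤ Real.log (a + b) := by
    rw [← Real.log_mul (by norm_num) ha.ne']
    exact Real.log_le_log (by positivity) (by linarith)
  have h2 : Real.log b ≤ Real.log (a + b) := Real.log_le_log hb (by linarith)
  nlinarith [mul_le_mul_of_nonneg_left h1 ha.le, mul_le_mul_of_nonneg_left h2 hb.le]

lemma pair_low (a b : ℝ) (ha : 0 ≤ a) (hb : 0 ≤ b) :
    Real.negMulLog (a + b) + Real.log 2 * min a b ≤ Real.negMulLog a + Real.negMulLog b := by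
  rcases le_total a b with h | h
  · rw [min_eq_left h]; exact pair_low' a b ha h
  · rw [min_eq_right h, add_comm a b, add_comm (Real.negMulLog a)]; exact pair_low' b a hb h

lemma gibbs1 (a s d : ℝ) (ha : 0 ≤ a) (hs : a ≤ s) (hd : 0 < d) :
    a * Real.log s + a * Real.log d - a * Real.log a ≤ d * s - a := by
  rcases ha.eq_or_lt with rfl | ha
  · simp; positivity
  have hs' := ha.trans_le hs
  have h := Real.log_le_sub_one_of_pos (x := s * d / a) (by positivity)
  rw [Real.log_div (by positivity) ha.ne', Real.log_mul hs'.ne' hd.ne'] at h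
  have := mul_le_mul_of_nonneg_left h ha.le
  have e : a * (s * d / a - 1) = d * s - a := by field_simp
  rw [e] at this
  linarith

lemma pair_up' (a b d : ℝ) (ha : 0 ≤ a) (hb : 0 ≤ b) (hd : 0 < d) (hd1 : d < 1) :
    Real.negMulLog a + Real.negMulLog b ≤
      Real.negMulLog (a + b) + a * (-Real.log d) + b * (-Real.log (1 - d)) := by
  have h1 := gibbs1 a (a+b) d ha (by linarith) hd
  have h2 := gibbs1 b (a+b) (1-d) hb (by linarith) (by linarith)
  unfold Real.negMulLog
  linarith

lemma pair_up (a b d : ℝ) (ha : 0 ≤ a) (hb : 0 ≤ b) (hd : 0 < d) (hd1 : d < 1) :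
    Real.negMulLog a + Real.negMulLog b ≤
      Real.negMulLog (a + b) + min a b * (-Real.log d)
        + (a + b - min a b) * (-Real.log (1 - d)) := by
  rcases le_total a b with h | h
  · rw [min_eq_left h]
    have := pair_up' a b d ha hb hd hd1
    rw [add_sub_cancel_left]; exact this
  · rw [min_eq_right h]
    have := pair_up' b a d hb ha hd hd1
    rw [add_comm b a] at this
    rw [add_sub_cancel_right]; linarith

lemma cnt_div (x : ℕ → Bool) (N k : ℕ) (u : Fin k → Bool) :
    (cnt x N k u : ℝ) / N = (c2 x N k u true : ℝ) / N + (c2 x N k u false : ℝ) / N := by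
  rw [cnt_split]; push_cast; ring

lemma EE_div (x : ℕ → Bool) (N k : ℕ) : (EE x N k : ℝ) / N =
    ∑ u, min ((c2 x N k u true : ℝ) / N) ((c2 x N k u false : ℝ) / N) := by
  unfold EE
  push_cast
  rw [Finset.sum_div]
  apply Finset.sum_congr rfl
  intro u _
  rw [min_div_div_right (by positivity)]

lemma step_low (x : ℕ → Bool) (N k : ℕ) :
    HH x N k + Real.log 2 * ((EE x N k : ℝ) / N) ≤ HH x N (k+1) := by
  rw [HH_succ, EE_div, Finset.mul_sum, HH, ← Finset.sum_add_distrib]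
  apply Finset.sum_le_sum
  intro u _
  rw [cnt_div]
  exact pair_low _ _ (by positivity) (by positivity)

lemma step_up (x : ℕ → Bool) (N k : ℕ) (hN : 0 < N) (d : ℝ) (hd : 0 < d) (hd1 : d < 1) :
    HH x N (k+1) ≤ HH x N k + ((EE x N k : ℝ) / N) * (-Real.log d) +
      (1 - (EE x N k : ℝ) / N) * (-Real.log (1 - d)) := by
  have h1 : (1:ℝ) = ∑ u, ((c2 x N k u true : ℝ) / N + (c2 x N k u false : ℝ) / N) := by
    simp only [← cnt_div]
    rw [← Finset.sum_div, ← Nat.cast_sum, sum_cnt, div_self (by positivity)]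
  rw [HH_succ, EE_div]
  conv_rhs => enter [2, 1, 1]; rw [h1]
  rw [← Finset.sum_sub_distrib, Finset.sum_mul, Finset.sum_mul, HH, ← Finset.sum_add_distrib,
    ← Finset.sum_add_distrib]
  apply Finset.sum_le_sum
  intro u _
  rw [cnt_div]
  exact pair_up _ _ d (by positivity) (by positivity) hd hd1

lemma step_one (x : ℕ → Bool) (N k : ℕ) (hN : 0 < N) :
    HH x N (k+1) ≤ HH x N k + Real.log 2 := by
  have := step_up x N k hN (1/2) (by norm_num) (by norm_num)
  rw [show (1:ℝ) - 1/2 = 1/2 by norm_num, one_div, Real.log_inv] at this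
  linarith

lemma HH_le (x : ℕ → Bool) (N k : ℕ) (hN : 0 < N) : HH x N k ≤ k * Real.log 2 := by
  induction k with
  | zero => simp [HH_zero x N hN]
  | succ k ih => have := step_one x N k hN; push_cast; linarith

lemma HH_nonneg (x : ℕ → Bool) (N k : ℕ) (hN : 0 < N) : 0 ≤ HH x N k := by
  induction k with
  | zero => simp [HH_zero x N hN]
  | succ k ih =>
    have := step_low x N k
    have h2 : 0 ≤ Real.log 2 := Real.log_nonneg (by norm_num)
    have : 0 ≤ Real.log 2 * ((EE x N k : ℝ) / N) := by positivity
    linarith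

lemma HH_low (x : ℕ → Bool) (N l : ℕ) (hN : 0 < N) (c : ℝ) (h : ∀ k < l, c ≤ (EE x N k : ℝ) / N) :
    l * (Real.log 2 * c) ≤ HH x N l := by
  induction l with
  | zero => simp [HH_zero x N hN]
  | succ k ih =>
    have := step_low x N k
    have h2 : 0 ≤ Real.log 2 := Real.log_nonneg (by norm_num)
    have h3 := mul_le_mul_of_nonneg_left (h k (by omega)) h2
    have := ih (fun j hj => h j (by omega))
    push_cast; linarith

lemma HH_up (x : ℕ → Bool) (N k m : ℕ) (hN : 0 < N) (d c : ℝ) (hd : 0 < d) (hd1 : d < 1)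
    (h : ∀ j, k ≤ j → j < k + m → (EE x N j : ℝ) / N ≤ c) :
    HH x N (k + m) ≤ k * Real.log 2 + m * (c * (-Real.log d) + (-Real.log (1 - d))) := by
  induction m with
  | zero => simpa using HH_le x N k hN
  | succ m ih =>
    have h1 := step_up x N (k+m) hN d hd hd1
    have h2 := ih (fun j hj hj' => h j hj (by omega))
    have h3 : 0 ≤ -Real.log d := by have := Real.log_nonpos hd.le hd1.le; linarith
    have h4 : 0 ≤ -Real.log (1-d) := by
      have := Real.log_nonpos (x := 1-d) (by linarith) (by linarith); linarith
    have h5 := mul_le_mul_of_nonneg_right (h (k+m) (by omega) (by omega)) h3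
    have h6 : 0 ≤ (EE x N (k+m) : ℝ) / N * (-Real.log (1-d)) := by positivity
    rw [← add_assoc]; push_cast; linarith

lemma hBlock_eq (x : ℕ → Bool) (l n : ℕ) (h : l ≤ n) :
    hBlock l x n = HH x (n + 1 - l) l / (l * Real.log 2) := by
  unfold hBlock HH
  have e : ((n + 1 - l : ℕ) : ℝ) = (n : ℝ) - l + 1 := by
    rw [Nat.cast_sub (by omega)]; push_cast; ring
  simp only [occ_eq, e, Real.negMulLog, Real.logb]
  rw [Finset.mul_sum, Finset.sum_div]
  apply Finset.sum_congr rfl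
  intro u _
  ring

/-- error count on `[l,n)` -/
def er (x : ℕ → Bool) (l n : ℕ) (f : (Fin l → Bool) → Bool) : ℕ :=
  ((Finset.Ico l n).filter (fun i => x i ≠ f (fun j => x (i - l + j)))).card

lemma gamma_ex (x : ℕ → Bool) (l n : ℕ) :
    ∃ f, gammaWord l x n = (1 / ((n:ℝ) - l)) * er x l n f := by
  obtain ⟨f, -, hf⟩ := Finset.exists_mem_eq_inf' (Finset.univ_nonempty)
    (fun f : (Fin l → Bool) → Bool => ((((Finset.Ico l n).filter
        (fun i => x i ≠ f (fun j => x (i - l + j)))).card : ℝ)))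
  exact ⟨f, by unfold gammaWord er; rw [hf]⟩

lemma gamma_le (x : ℕ → Bool) (l n : ℕ) (h : l ≤ n) (f) :
    gammaWord l x n ≤ (1 / ((n:ℝ) - l)) * er x l n f := by
  unfold gammaWord er
  apply mul_le_mul_of_nonneg_left
  · exact Finset.inf'_le (f := fun f : (Fin l → Bool) → Bool => ((((Finset.Ico l n).filter
        (fun i => x i ≠ f (fun j => x (i - l + j)))).card : ℝ))) (Finset.mem_univ f)
  · have : (l:ℝ) ≤ n := by exact_mod_cast h
    exact one_div_nonneg.2 (by linarith)

lemma er_le (x : ℕ → Bool) (l n : ℕ) (f) : er x l n f ≤ n - l := by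
  unfold er
  exact (Finset.card_filter_le _ _).trans (by simp)

lemma gamma_nonneg (x : ℕ → Bool) (l n : ℕ) (h : l ≤ n) : 0 ≤ gammaWord l x n := by
  obtain ⟨f, hf⟩ := gamma_ex x l n
  have : (l:ℝ) ≤ n := by exact_mod_cast h
  rw [hf]
  exact mul_nonneg (one_div_nonneg.2 (by linarith)) (by positivity)

lemma gamma_le_one (x : ℕ → Bool) (l n : ℕ) (h : l ≤ n) : gammaWord l x n ≤ 1 := by
  obtain ⟨f, hf⟩ := gamma_ex x l n
  have h1 : (l:ℝ) ≤ n := by exact_mod_cast h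
  have h2 : (er x l n f : ℝ) ≤ (n:ℝ) - l := by
    rw [← Nat.cast_sub h]; exact_mod_cast er_le x l n f
  rw [hf, one_div_mul_eq_div]
  exact div_le_one_of_le₀ h2 (by linarith)

/-- lifting a predictor -/
def lift (k l : ℕ) (h : k ≤ l) (f : (Fin k → Bool) → Bool) : (Fin l → Bool) → Bool :=
  fun u => f (fun j => u ⟨l - k + j, by omega⟩)

/-- shorter-context errors bound longer-context ones, up to boundary. -/
lemma er_lift (x : ℕ → Bool) (k l n : ℕ) (h : k < l) (hn : l ≤ n) (f) :
    er x l n (lift k l h.le f) ≤ err x (n + 1 - l) k f + l := by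
  unfold er err
  have : (Finset.Ico l n).filter (fun i => x i ≠ lift k l h.le f (fun j => x (i - l + j))) ⊆
      (((Finset.range (n+1-l)).filter (fun i => x (i+k) ≠ f (wd x k i))).image (· + k)) ∪
        Finset.Ico (n - l) n := by
    intro i hi
    simp only [Finset.mem_filter, Finset.mem_Ico, Finset.mem_union, Finset.mem_image,
      Finset.mem_range] at hi ⊢
    by_cases hi' : n - l ≤ i
    · exact Or.inr ⟨hi', hi.1.2⟩
    · refine Or.inl ⟨i - k, ⟨by omega, ?_⟩, by omega⟩
      rw [show i - k + k = i by omega]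
      have e : wd x k (i-k) = fun j : Fin k => x (i - l + (l - k + j)) := by
        funext j
        unfold wd
        congr 1
        omega
      rw [e]
      exact hi.2
  refine (Finset.card_le_card this).trans ((Finset.card_union_le _ _).trans ?_)
  refine add_le_add Finset.card_image_le ?_
  simp; omega

lemma err_lift (x : ℕ → Bool) (k j n l : ℕ) (h : k ≤ j) (hj : j < l) (hn : l ≤ n) (f) :
    err x (n + 1 - l) j (lift k j h f) ≤ er x k n f := by
  unfold er err
  refine Finset.card_le_card_of_injOn (· + j) ?_ (fun _ _ _ _ h => by simpa using h)
  intro i hi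
  simp only [Finset.coe_filter, Finset.mem_range, Set.mem_ofPred_eq, Finset.mem_Ico] at hi ⊢
  refine ⟨⟨by omega, by omega⟩, ?_⟩
  have e : (fun t : Fin k => x (i + j - k + t)) = fun t : Fin k => wd x j i ⟨j - k + t, by omega⟩ := by
    funext t
    unfold wd
    congr 1
    simp; omega
  rw [e]
  exact hi.2

lemma log2pos : 0 < Real.log 2 := Real.log_pos (by norm_num)

lemma h_nonneg (x : ℕ → Bool) (l n : ℕ) (h : l ≤ n) : 0 ≤ hBlock l x n := by
  rw [hBlock_eq x l n h]
  have := HH_nonneg x (n+1-l) l (by omega)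
  have := log2pos
  positivity

lemma h_le_one (x : ℕ → Bool) (l n : ℕ) (h : l ≤ n) : hBlock l x n ≤ 1 := by
  rw [hBlock_eq x l n h]
  have := log2pos
  exact div_le_one_of_le₀ (HH_le x _ l (by omega)) (by positivity)

lemma h_low (x : ℕ → Bool) (l n : ℕ) (hl : 0 < l) (h : l < n) :
    (((n:ℝ) - l) * gammaWord l x n - l) / ((n:ℝ) - l + 1) ≤ hBlock l x n := by
  have hc : (l:ℝ) < n := by exact_mod_cast h
  have e : ((n + 1 - l : ℕ) : ℝ) = (n : ℝ) - l + 1 := by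
    rw [Nat.cast_sub (by omega)]; push_cast; ring
  rw [hBlock_eq x l n h.le, le_div_iff₀ (by have := log2pos; positivity)]
  refine le_trans (le_of_eq ?_) (HH_low x (n+1-l) l (by omega)
    ((((n:ℝ) - l) * gammaWord l x n - l) / ((n:ℝ) - l + 1)) ?_)
  · ring
  · intro k hk
    obtain ⟨f, hf⟩ := EE_ex x (n+1-l) k
    rw [e, ← hf]
    apply div_le_div_of_nonneg_right _ (by linarith)
    have h1 := gamma_le x l n h.le (lift k l hk.le f)
    have h2 : (er x l n (lift k l hk.le f) : ℝ) ≤ err x (n+1-l) k f + l := by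
      exact_mod_cast er_lift x k l n hk h.le f
    rw [one_div_mul_eq_div, le_div_iff₀ (by linarith)] at h1
    linarith

lemma h_up (x : ℕ → Bool) (k m n : ℕ) (h : k + m < n) (hp : 0 < k + m) (d : ℝ) (hd : 0 < d)
    (hd1 : d < 1) :
    hBlock (k+m) x n ≤ (k * Real.log 2 + m * ((((n:ℝ) - k) * gammaWord k x n /
      ((n:ℝ) - (k + m) + 1)) * (-Real.log d) + (-Real.log (1 - d)))) / ((k + m) * Real.log 2) := by
  have hc : (k:ℝ) + m < n := by exact_mod_cast h
  have hm : (0:ℝ) ≤ m := by positivity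
  have e : ((n + 1 - (k+m) : ℕ) : ℝ) = (n : ℝ) - (k+m) + 1 := by
    rw [Nat.cast_sub (by omega)]; push_cast; ring
  have := log2pos
  rw [hBlock_eq x (k+m) n h.le]
  push_cast
  apply div_le_div_of_nonneg_right _ (by positivity)
  apply HH_up x _ k m (by omega) d _ hd hd1
  intro j hj hj'
  rw [e]
  apply div_le_div_of_nonneg_right _ (by linarith)
  obtain ⟨f, hf⟩ := gamma_ex x k n
  rw [hf, ← mul_assoc, mul_one_div_cancel (by linarith), one_mul]
  exact_mod_cast (EE_le x _ j _).trans (err_lift x k j n (k+m) hj hj' h.le f)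

lemma hUp_iff (x : ℕ → Bool) : hUp x = 0 ↔
    ∀ ε > 0, ∀ᶠ l in atTop, ∀ᶠ n in atTop, hBlock l x n < ε :=
  two_limsup _ 1 (fun l => (eventually_ge_atTop l).mono fun n hn => h_nonneg x l n hn)
    (fun l => (eventually_ge_atTop l).mono fun n hn => h_le_one x l n hn)

lemma gammaUp_iff (x : ℕ → Bool) : gammaUp x = 0 ↔
    ∀ ε > 0, ∀ᶠ l in atTop, ∀ᶠ n in atTop, gammaWord l x n < ε :=
  two_limsup _ 1 (fun l => (eventually_ge_atTop l).mono fun n hn => gamma_nonneg x l n hn)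
    (fun l => (eventually_ge_atTop l).mono fun n hn => gamma_le_one x l n hn)

lemma ev_cast (c : ℝ) : ∀ᶠ n : ℕ in atTop, c < (n:ℝ) :=
  tendsto_natCast_atTop_atTop.eventually_gt_atTop c

lemma dir1 (x : ℕ → Bool) (H : ∀ ε > 0, ∀ᶠ l in atTop, ∀ᶠ n in atTop, hBlock l x n < ε) :
    ∀ ε > 0, ∀ᶠ l in atTop, ∀ᶠ n in atTop, gammaWord l x n < ε := by
  intro ε hε
  filter_upwards [H (ε/4) (by positivity), eventually_gt_atTop 0] with l hl hl0
  filter_upwards [hl, eventually_gt_atTop l, ev_cast (l + 2 * l / ε + 1)] with n hn hln hbig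
  have hlow := (h_low x l n hl0 hln).trans_lt hn
  have hc : (l:ℝ) + 1 ≤ n := by exact_mod_cast hln
  rw [div_lt_iff₀ (by linarith)] at hlow
  by_contra! hcon
  have h1 : ((n:ℝ) - l) * ε ≤ ((n:ℝ) - l) * gammaWord l x n :=
    mul_le_mul_of_nonneg_left hcon (by linarith)
  have h2 : (2 * l / ε) * ε < ((n:ℝ) - l) * ε := mul_lt_mul_of_pos_right (by linarith) hε
  rw [div_mul_cancel₀ _ hε.ne'] at h2
  have h3 : ε * ((n:ℝ) - l + 1) ≤ ε * (2 * ((n:ℝ) - l)) := mul_le_mul_of_nonneg_left (by linarith) hε.le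
  nlinarith

lemma dir2 (x : ℕ → Bool) (H : ∀ ε > 0, ∀ᶠ l in atTop, ∀ᶠ n in atTop, gammaWord l x n < ε) :
    ∀ ε > 0, ∀ᶠ l in atTop, ∀ᶠ n in atTop, hBlock l x n < ε := by
  intro ε hε
  have L := log2pos
  -- choose d
  set t := ε * Real.log 2 / 4 with ht
  have tpos : 0 < t := by positivity
  set d := 1 - Real.exp (-t) with hd
  have hexp : Real.exp (-t) < 1 := by rw [Real.exp_lt_one_iff]; linarith
  have d0 : 0 < d := by linarith
  have d1 : d < 1 := by have := Real.exp_pos (-t); linarith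
  have ld : -Real.log (1 - d) = t := by rw [hd, sub_sub_cancel, Real.log_exp, neg_neg]
  have A : 0 < -Real.log d := by have := Real.log_neg d0 d1; linarith
  set A' := -Real.log d with hA
  obtain ⟨k, hk⟩ := (H (t / (2 * A')) (by positivity)).exists
  filter_upwards [eventually_gt_atTop k, ev_cast (4 * k / ε)] with l hl hlbig
  obtain ⟨m, rfl⟩ := Nat.exists_eq_add_of_lt hl
  rw [add_assoc] at *
  set m' := m + 1
  filter_upwards [hk, eventually_gt_atTop (k+m'), ev_cast (2 * (k + m'))] with n hn hln hbig
  have hm : (0:ℝ) ≤ m' := by positivity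
  have hk0 : (0:ℝ) ≤ k := by positivity
  have hp : (0:ℝ) < k + m' := by positivity
  have hup := h_up x k m' n hln (by omega) d d0 d1
  refine hup.trans_lt ?_
  rw [ld, ← hA, div_lt_iff₀ (by positivity)]
  have g0 := gamma_nonneg x k n (by omega)
  have hc : (((n:ℝ) - k) * gammaWord k x n / ((n:ℝ) - (k + m') + 1)) * A' ≤ t := by
    have : ((n:ℝ) - k) * gammaWord k x n / ((n:ℝ) - (k + m') + 1) ≤ t / A' := by
      rw [div_le_iff₀ (by linarith)]
      calc ((n:ℝ) - k) * gammaWord k x n ≤ (2 * ((n:ℝ) - (k + m') + 1)) * (t / (2 * A')) := by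
            apply mul_le_mul (by linarith) hn.le g0 (by linarith)
        _ = _ := by field_simp
    calc _ ≤ t / A' * A' := mul_le_mul_of_nonneg_right this A.le
      _ = t := by field_simp
  have h1 : (m':ℝ) * ((((n:ℝ) - k) * gammaWord k x n / ((n:ℝ) - (k + m') + 1)) * A' + t) ≤
      m' * (2 * t) := mul_le_mul_of_nonneg_left (by linarith) hm
  have h2 : 4 * (k:ℝ) < ε * (k + m') := by
    rw [div_lt_iff₀ hε] at hlbig
    push_cast at hlbig ⊢
    linarith
  have h3 := mul_lt_mul_of_pos_right h2 L
  have h4 : (m':ℝ) * t ≤ (k + m') * t := mul_le_mul_of_nonneg_right (by linarith) tpos.le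
  have h5 : ε * ((k + m') * Real.log 2) = 4 * ((k + m') * t) := by rw [ht]; ring
  have h6 : 0 < ((k:ℝ) + m') * t := by positivity
  linarith

end HG

theorem hUp_eq_zero_iff_gammaUp_eq_zero (x : ℕ → Bool) :
    hUp x = 0 ↔ gammaUp x = 0 := by
  rw [HG.hUp_iff, HG.gammaUp_iff]
  exact ⟨HG.dir1 x, HG.dir2 x⟩
end
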